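/- arXiv:1602.04482 — 5 statements merged into one kernel-verified Lean document; each statement's English description precedes it below -/
import Mathlib

section
/- Let n, k, r, δ be integers with n ≥ 1, k ≥ 1, 1 ≤ r ≤ k and δ ≥ 2. Let F be a finite field and let C be a linear code over F of length n, dimension k, and minimum distance d, having all-symbol locality (r,δ). Then d ≤ n − k + 1 − (⌈k/r⌉ − 1)(δ − 1). -/
/-!
For a coordinate set `S`, let `K(S)` be the space of codewords vanishing on `S`, and
`f(S) = dim K(S)`, so that `k - f(S)` is the dimension of the projection to `S`.
A nonzero word of `K(S)` has weight at most `n - |S|`, so the bound follows from a set `S` with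
`f(S) = 1` and `|S| + f(S) ≥ k + m (δ - 1)`, where `m = ⌈k/r⌉ - 1`.

The set is built greedily (`exists_large_excess`). As long as `K(S) ≠ 0`, take a coordinate where
some word of `K(S)` is nonzero and adjoin a locality set `L` containing it. Then `L \ S` has at
least `δ` elements, and any `δ - 1` of them are redundant: a word vanishing on the rest of `S ∪ L`
vanishes on `L`. Hence `|S| + f(S)` grows by at least `δ - 1` while `f(S)` drops by at most `r`
(`locality_step`). Since `m r < k`, this can be done `m` times keeping `f(S) ≥ 1`. Adding single
coordinates then brings `f(S)` down to `1` without decreasing `|S| + f(S)`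
(`exists_vanishing_one`).
-/

open scoped BigOperators

/-- The number of coordinates within `S` on which `x` and `y` differ. -/
def projDist {ι F : Type} [DecidableEq ι] [DecidableEq F]
    (S : Finset ι) (x y : ι → F) : ℕ :=
  (S.filter fun i => x i ≠ y i).card

/-- `S` is an `(r,δ)`-locality set of the code `C`: it has at most `r + δ - 1`
coordinates, and any two codewords whose projections to `S` differ, differ in at
least `δ` coordinates of `S`. -/
def IsLocalitySet {ι F : Type} [Fintype ι] [DecidableEq ι] [Field F] [DecidableEq F]
    (C : Submodule F (ι → F)) (r δ : ℕ) (S : Finset ι) : Prop :=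
  S.card ≤ r + δ - 1 ∧
    ∀ x ∈ C, ∀ y ∈ C, (∃ i ∈ S, x i ≠ y i) → δ ≤ projDist S x y

/-- The code `C` has all-symbol locality `(r,δ)`: every coordinate lies in some
`(r,δ)`-locality set. -/
def HasAllSymbolLocality {ι F : Type} [Fintype ι] [DecidableEq ι] [Field F] [DecidableEq F]
    (C : Submodule F (ι → F)) (r δ : ℕ) : Prop :=
  ∀ i : ι, ∃ S : Finset ι, i ∈ S ∧ IsLocalitySet C r δ S

/-- `d` is the minimum (Hamming) distance of the code `C`. -/
def IsMinDist {ι F : Type} [Fintype ι] [DecidableEq ι] [Field F] [DecidableEq F]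
    (C : Submodule F (ι → F)) (d : ℕ) : Prop :=
  (∃ x ∈ C, ∃ y ∈ C, x ≠ y ∧ hammingDist x y = d) ∧
    ∀ x ∈ C, ∀ y ∈ C, x ≠ y → d ≤ hammingDist x y

/-- The subcode of codewords of `C` vanishing on all coordinates of `S`
(the code shortened at `S`, without deleting the coordinates). -/
def vanishingSubcode {ι F : Type} [Field F] (C : Submodule F (ι → F)) (S : Finset ι) :
    Submodule F (ι → F) where
  carrier := {c | c ∈ C ∧ ∀ i ∈ S, c i = 0}
  add_mem' := by
    rintro a b ⟨ha, ha'⟩ ⟨hb, hb'⟩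
    exact ⟨C.add_mem ha hb, fun i hi => by simp [ha' i hi, hb' i hi]⟩
  zero_mem' := ⟨C.zero_mem, fun i _ => rfl⟩
  smul_mem' := by
    rintro t a ⟨ha, ha'⟩
    exact ⟨C.smul_mem t ha, fun i hi => by simp [ha' i hi]⟩

section

variable {ι F : Type} [Field F]

theorem mem_vanishingSubcode {C : Submodule F (ι → F)} {S : Finset ι} {c : ι → F} :
    c ∈ vanishingSubcode C S ↔ c ∈ C ∧ ∀ i ∈ S, c i = 0 := Iff.rfl

theorem exists_ne_zero_of_finrank_pos {C : Submodule F (ι → F)} {S : Finset ι}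
    (h : 0 < Module.finrank F (vanishingSubcode C S)) :
    ∃ c ∈ vanishingSubcode C S, ∃ i, c i ≠ 0 := by
  have hne : vanishingSubcode C S ≠ ⊥ := by
    intro h0
    rw [h0, finrank_bot] at h
    exact lt_irrefl _ h
  obtain ⟨c, hc, hc0⟩ := Submodule.exists_mem_ne_zero_of_ne_bot hne
  exact ⟨c, hc, Function.ne_iff.1 hc0⟩

variable [Fintype ι] [DecidableEq ι]

/-- Imposing one more zero lowers the dimension by at most one. -/
theorem finrank_vanishing_insert (C : Submodule F (ι → F)) (S : Finset ι) (i : ι) :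
    Module.finrank F (vanishingSubcode C S) ≤
      Module.finrank F (vanishingSubcode C (insert i S)) + 1 := by
  let φ : vanishingSubcode C S →ₗ[F] F := (LinearMap.proj i).domRestrict _
  have h1 := LinearMap.finrank_range_add_finrank_ker φ
  have h2 : Module.finrank F (LinearMap.range φ) ≤ 1 := by
    simpa using Submodule.finrank_le (LinearMap.range φ)
  have h3 : Module.finrank F (LinearMap.ker φ) ≤
      Module.finrank F (vanishingSubcode C (insert i S)) := by
    rw [← Submodule.finrank_map_subtype_eq]
    apply Submodule.finrank_mono
    rintro x ⟨⟨y, hy⟩, hy0, rfl⟩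
    refine ⟨hy.1, fun j hj => ?_⟩
    rcases Finset.mem_insert.1 hj with rfl | hj
    · exact hy0
    · exact hy.2 j hj
  omega

theorem finrank_vanishing_union (C : Submodule F (ι → F)) (S T : Finset ι) :
    Module.finrank F (vanishingSubcode C S) ≤
      Module.finrank F (vanishingSubcode C (S ∪ T)) + T.card := by
  induction T using Finset.induction_on with
  | empty => rw [Finset.union_empty]; exact Nat.le_add_right _ _
  | insert i T hi ih =>
    have := finrank_vanishing_insert C (S ∪ T) i
    rw [Finset.union_insert, Finset.card_insert_of_notMem hi]
    omega

/-- Adjoining a suitable locality set lowers the dimension of the vanishing subcode by at most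
`r`, and by at most the number of coordinates gained minus `δ - 1`. -/
theorem locality_step [DecidableEq F] {C : Submodule F (ι → F)} {r δ : ℕ} (hδ : 2 ≤ δ)
    (hloc : HasAllSymbolLocality C r δ) (S : Finset ι)
    (h : 0 < Module.finrank F (vanishingSubcode C S)) :
    ∃ S' : Finset ι,
      Module.finrank F (vanishingSubcode C S) ≤
        Module.finrank F (vanishingSubcode C S') + r ∧
      S.card + Module.finrank F (vanishingSubcode C S) + (δ - 1) ≤
        S'.card + Module.finrank F (vanishingSubcode C S') := by
  obtain ⟨c, hc, i, hi⟩ := exists_ne_zero_of_finrank_pos h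
  obtain ⟨L, hiL, hcard, hL⟩ := hloc i
  have hwt := hL c hc.1 0 C.zero_mem ⟨i, hiL, by simpa using hi⟩
  have hLS : δ ≤ (L \ S).card := by
    refine hwt.trans (Finset.card_le_card fun j hj => ?_)
    obtain ⟨hjL, hj0⟩ := Finset.mem_filter.1 hj
    exact Finset.mem_sdiff.2 ⟨hjL, fun hjS => hj0 (hc.2 j hjS)⟩
  obtain ⟨T, hTsub, hTcard⟩ := Finset.exists_subset_card_eq (show δ - 1 ≤ (L \ S).card by omega)
  -- The `δ - 1` coordinates of `T` are redundant, by the local minimum distance.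
  have hle : vanishingSubcode C (S ∪ ((L \ S) \ T)) ≤ vanishingSubcode C (S ∪ L) := by
    rintro x ⟨hxC, hx⟩
    refine ⟨hxC, fun j hj => ?_⟩
    by_contra hxj
    have hjL : j ∈ L := by
      rcases Finset.mem_union.1 hj with hjS | hjL
      · exact absurd (hx j (Finset.mem_union_left _ hjS)) hxj
      · exact hjL
    have hw := hL x hxC 0 C.zero_mem ⟨j, hjL, by simpa using hxj⟩
    have : projDist L x 0 ≤ T.card := by
      refine Finset.card_le_card fun l hl => ?_
      obtain ⟨hlL, hl0⟩ := Finset.mem_filter.1 hl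
      by_contra hlT
      apply hl0
      apply hx l
      by_cases hlS : l ∈ S <;> simp [hlS, hlL, hlT]
    omega
  have hmono := Submodule.finrank_mono hle
  have hdrop := finrank_vanishing_union C S ((L \ S) \ T)
  have hU : ((L \ S) \ T).card + T.card = (L \ S).card := Finset.card_sdiff_add_card_eq_card hTsub
  have hLSle : (L \ S).card ≤ L.card := Finset.card_le_card Finset.sdiff_subset
  have hun : (S ∪ L).card = S.card + (L \ S).card := by
    rw [← Finset.union_sdiff_self_eq_union, Finset.card_union_of_disjoint Finset.disjoint_sdiff]
  exact ⟨S ∪ L, by omega, by omega⟩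

/-- For every `m` with `m r < dim C` there is a set whose projection has dimension at most `m r`
and at least `m (δ - 1)` redundant coordinates. -/
theorem exists_large_excess [DecidableEq F] {C : Submodule F (ι → F)} {r δ : ℕ} (hδ : 2 ≤ δ)
    (hloc : HasAllSymbolLocality C r δ) (m : ℕ) (hm : m * r < Module.finrank F C) :
    ∃ S : Finset ι,
      Module.finrank F C ≤ Module.finrank F (vanishingSubcode C S) + m * r ∧
      Module.finrank F C + m * (δ - 1) ≤
        S.card + Module.finrank F (vanishingSubcode C S) := by
  induction m with
  | zero =>
    have h : vanishingSubcode C ∅ = C := by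
      ext c
      simp [mem_vanishingSubcode]
    exact ⟨∅, by rw [h]; omega, by rw [h]; omega⟩
  | succ m ih =>
    rw [Nat.succ_mul] at hm
    obtain ⟨S, h1, h2⟩ := ih (by omega)
    obtain ⟨S', h3, h4⟩ := locality_step hδ hloc S (by omega)
    exact ⟨S', by rw [Nat.succ_mul]; omega, by rw [Nat.succ_mul]; omega⟩

/-- A set with nonzero vanishing subcode can be enlarged to one whose vanishing subcode is a line,
without losing redundant coordinates: each coordinate added is nonzero on the current subcode. -/
theorem exists_vanishing_one (C : Submodule F (ι → F)) (S : Finset ι)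
    (h : 0 < Module.finrank F (vanishingSubcode C S)) :
    ∃ S' : Finset ι, Module.finrank F (vanishingSubcode C S') = 1 ∧
      S.card + Module.finrank F (vanishingSubcode C S) ≤ S'.card + 1 := by
  induction hf : Module.finrank F (vanishingSubcode C S) using Nat.strong_induction_on
    generalizing S with
  | _ f ih =>
    by_cases h1 : f = 1
    · exact ⟨S, by omega, by omega⟩
    obtain ⟨c, hc, i, hi⟩ := exists_ne_zero_of_finrank_pos h
    have hiS : i ∉ S := fun hiS => hi (hc.2 i hiS)
    have hlt : vanishingSubcode C (insert i S) < vanishingSubcode C S := by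
      refine lt_of_le_of_ne
        (fun x hx => ⟨hx.1, fun j hj => hx.2 j (Finset.mem_insert_of_mem hj)⟩) fun heq => ?_
      rw [← heq] at hc
      exact hi (hc.2 i (Finset.mem_insert_self i S))
    have hfl := Submodule.finrank_lt_finrank_of_lt hlt
    have hge := finrank_vanishing_insert C S i
    obtain ⟨S', h2, h3⟩ := ih _ (by omega) (insert i S) (by omega) rfl
    rw [Finset.card_insert_of_notMem hiS] at h3
    exact ⟨S', h2, by omega⟩

end

/-- The generalized Singleton bound for linear locally repairable codes:
`d ≤ n - k + 1 - (⌈k/r⌉ - 1)(δ - 1)`. -/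
theorem generalized_singleton_bound_LRC
    (n k r δ d : ℕ) (hn : 1 ≤ n) (hk : 1 ≤ k) (hr : 1 ≤ r) (hrk : r ≤ k) (hδ : 2 ≤ δ)
    (F : Type) [Field F] [Fintype F] [DecidableEq F]
    (C : Submodule F (Fin n → F))
    (hdim : Module.finrank F C = k)
    (hloc : HasAllSymbolLocality C r δ)
    (hmin : IsMinDist C d) :
    (d : ℤ) ≤ (n : ℤ) - (k : ℤ) + 1 - (⌈(k : ℚ) / (r : ℚ)⌉ - 1) * ((δ : ℤ) - 1) := by
  have hr0 : (0 : ℚ) < r := by exact_mod_cast hr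
  have hpos : 0 < ⌈(k : ℚ) / (r : ℚ)⌉ := Int.ceil_pos.2 (div_pos (by exact_mod_cast hk) hr0)
  obtain ⟨m, hm⟩ : ∃ m : ℕ, ⌈(k : ℚ) / (r : ℚ)⌉ - 1 = m :=
    ⟨_, (Int.toNat_of_nonneg (by omega)).symm⟩
  have hmk : m * r < k := by
    have h : (m : ℤ) < ⌈(k : ℚ) / (r : ℚ)⌉ := by omega
    rw [Int.lt_ceil, lt_div_iff₀ hr0] at h
    exact_mod_cast h
  obtain ⟨S, h1, h2⟩ := exists_large_excess hδ hloc m (by omega)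
  obtain ⟨S', h3, h4⟩ := exists_vanishing_one C S (by omega)
  obtain ⟨c, hc, i, hi⟩ := exists_ne_zero_of_finrank_pos (C := C) (S := S') (by omega)
  have hd := hmin.2 c hc.1 0 C.zero_mem (Function.ne_iff.2 ⟨i, hi⟩)
  have hwt : hammingDist c 0 ≤ S'ᶜ.card := by
    refine Finset.card_le_card fun j hj => ?_
    rw [Finset.mem_compl]
    exact fun hjS => (Finset.mem_filter.1 hj).2 (hc.2 j hjS)
  have hcompl := Finset.card_add_card_compl S'
  rw [Fintype.card_fin] at hcompl
  have key : d + k + m * (δ - 1) ≤ n + 1 := by omega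
  rw [hm]
  zify [show 1 ≤ δ by omega] at key
  linarith
end

section
/- Let n, k, r, δ be integers with 0 < r < k ≤ n − ⌈k/r⌉(δ − 1) and δ ≥ 2. Set a = r⌈k/r⌉ − k and b = (r+δ−1)⌈n/(r+δ−1)⌉ − n. Assume b > a ≥ ⌈k/r⌉ − 1, ⌈k/r⌉ = 2, and ⌈n/(r+δ−1)⌉ ≥ ⌈b/a⌉ + 1. Then there exists a finite field F and a linear code C over F of length n, dimension k, with all-symbol locality (r,δ), whose minimum distance equals n − k + 1 − (⌈k/r⌉ − 1)(δ − 1); moreover, every linear code (over any finite field) of length n, dimension k, with all-symbol locality (r,δ) has minimum distance at most n − k + 1 − (⌈k/r⌉ − 1)(δ − 1). Hence the maximal achievable minimum distance d_max(n,k,r,δ) for linear locally repairable codes equals n − k + 1 − (⌈k/r⌉ − 1)(δ − 1). -/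
/-!
Since `⌈k/r⌉ = 2`, one has `k = 2r - a`, and the claimed optimum is `d = n - k - δ + 2`.

The upper bound (`minDist_le`) is obtained by imposing `k - 1` zeros on a codeword, as many as
useful inside one locality set, where the last `δ - 1` zeros come for free.

For the construction, put `s = r + δ - 1`. The hypothesis `⌈n/s⌉ ≥ ⌈b/a⌉ + 1` says that
`a + b ≤ m a` with `m = ⌈n/s⌉`, so `a + b` splits into `m` parts `f j ≤ a`, one of them equal to
`a`. Hence the `n` coordinates are covered by `m` groups of size `s` that share points only within a
common core of size `a`, the `j`-th group containing `f j` core points (`exists_groups`).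
Give the coordinates vectors in a `k`-dimensional space that are generic subject to every group
spanning a space of dimension at most `r`. Then any `k` vectors with at most `r` in each group are
independent: by Hall's theorem (`Groups.exists_matching`) the corresponding minor is a nonzero
polynomial in the parameters, and all these minors are nonzero at a suitable point over a large
prime field (`exists_prime_matrix`). Two groups together have at least `2r - a = k` generic
dimensions, which implies that any `k + δ - 1` coordinates contain such a `k`-subset
(`Groups.exists_basis_extension`). This yields both the distance and the locality
(`Groups.exists_code`).
-/


open scoped BigOperators

namespace PerfectLRC

/-! ### Generic matrices of prescribed support -/

/-- A product `X * Y` of generic matrices over a prime field, where column `i` of `Y` is supported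
on `N i`: every maximal minor whose columns `q` can be matched into the supports is nonzero. With
indeterminate entries over `ℤ` each such minor is a nonzero polynomial, so some integer point avoids
the zeros of all of them at once, and reduction modulo a large prime keeps them nonzero. -/
theorem exists_prime_matrix {ι : Type} [Fintype ι] [DecidableEq ι] (k : ℕ)
    (N : ι → Finset ι) :
    ∃ p : ℕ, p.Prime ∧ ∃ (X : Matrix (Fin k) ι (ZMod p)) (Y : Matrix ι ι (ZMod p)),
      (∀ l i, l ∉ N i → Y l i = 0) ∧
      ∀ q : Fin k → ι, (∃ f : Fin k → ι, Function.Injective f ∧ ∀ c, f c ∈ N (q c)) →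
        Function.Injective q → ((X * Y).submatrix id q).det ≠ 0 := by
  classical
  let σ := (Fin k × ι) ⊕ (ι × ι)
  let X : Matrix (Fin k) ι (MvPolynomial σ ℤ) :=
    Matrix.of fun c l => MvPolynomial.X (Sum.inl (c, l))
  let Y : Matrix ι ι (MvPolynomial σ ℤ) :=
    Matrix.of fun l i => if l ∈ N i then MvPolynomial.X (Sum.inr (l, i)) else 0
  let good : Finset (Fin k → ι) := Finset.univ.filter fun q =>
    (∃ f : Fin k → ι, Function.Injective f ∧ ∀ c, f c ∈ N (q c)) ∧ Function.Injective q
  let P : MvPolynomial σ ℤ := ∏ q ∈ good, ((X * Y).submatrix id q).det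
  have hP : P ≠ 0 := by
    refine Finset.prod_ne_zero_iff.mpr ?_
    rintro q hq hdet
    obtain ⟨⟨f, hf, hfN⟩, hq⟩ := (Finset.mem_filter.mp hq).2
    -- Column `q c` of `Y` becomes the unit vector at `f c`, and column `f c` of `X` the unit
    -- vector at `c`, so that the selected minor becomes the identity.
    let x : σ → ℤ := Sum.elim (fun u => if f u.1 = u.2 then 1 else 0)
      (fun u => if ∃ c, q c = u.2 ∧ f c = u.1 then 1 else 0)
    have h := congrArg (MvPolynomial.eval x) hdet
    rw [RingHom.map_det, map_zero] at h
    have h1 : (MvPolynomial.eval x).mapMatrix ((X * Y).submatrix id q) = 1 := by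
      ext c c'
      simp only [RingHom.mapMatrix_apply, Matrix.map_apply, Matrix.submatrix_apply, id,
        Matrix.mul_apply, map_sum, map_mul, X, Y, Matrix.of_apply, MvPolynomial.eval_X]
      rw [Finset.sum_eq_single (f c)]
      · by_cases hc : c = c'
        · subst hc
          simp only [hfN, if_true, MvPolynomial.eval_X, x, Sum.elim_inl, Sum.elim_inr,
            Matrix.one_apply_eq, one_mul]
          exact if_pos ⟨c, rfl, rfl⟩
        · have h2 : ¬ ∃ d, q d = q c' ∧ f d = f c := by
            rintro ⟨d, h3, h4⟩
            exact hc ((hf h4).symm.trans (hq h3))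
          rw [Matrix.one_apply_ne hc]
          split_ifs
          · simp only [MvPolynomial.eval_X, x, Sum.elim_inr, if_neg h2, mul_zero]
          · simp
      · intro l _ hl
        simp [x, Ne.symm hl]
      · simp
    rw [h1, Matrix.det_one] at h
    exact one_ne_zero h
  obtain ⟨x, hx⟩ : ∃ x : σ → ℤ, MvPolynomial.eval x P ≠ 0 := by
    by_contra! h
    exact hP (MvPolynomial.funext fun x => by rw [h x, map_zero])
  obtain ⟨p, hpN, hp⟩ := Nat.exists_infinite_primes ((MvPolynomial.eval x P).natAbs + 1)
  have : Fact p.Prime := ⟨hp⟩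
  let φ : MvPolynomial σ ℤ →+* ZMod p := (Int.castRingHom (ZMod p)).comp (MvPolynomial.eval x)
  have hφ : φ P ≠ 0 := by
    intro h
    have h : ((MvPolynomial.eval x P : ℤ) : ZMod p) = 0 := h
    rw [ZMod.intCast_zmod_eq_zero_iff_dvd] at h
    have := Int.natAbs_dvd_natAbs.mpr h
    rw [Int.natAbs_natCast] at this
    have := Nat.le_of_dvd (Int.natAbs_pos.mpr hx) this
    omega
  refine ⟨p, hp, X.map φ, Y.map φ, ?_, ?_⟩
  · intro l i hl
    simp [Y, hl]
  · intro q hf hq h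
    have hmem : q ∈ good := by simp [good, hf, hq]
    apply hφ
    rw [map_prod]
    refine Finset.prod_eq_zero hmem ?_
    rw [RingHom.map_det, RingHom.mapMatrix_apply, ← Matrix.submatrix_map, Matrix.map_mul]
    exact h

/-! ### Combinatorics of the locality groups -/

/-- A covering of the coordinate set `ι` by groups `S j` of common size `s` which meet pairwise
only inside a common core `A` of size at most `r`. The groups are going to be the locality sets,
each of rank `r`. -/
structure Groups {ι : Type} [Fintype ι] [DecidableEq ι] (J : Type) (r s : ℕ) where
  A : Finset ι
  S : J → Finset ι
  card_A_le : A.card ≤ r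
  card_S : ∀ j, (S j).card = s
  inter_sub : ∀ i j, i ≠ j → S i ∩ S j ⊆ A
  cover : ∀ x, ∃ j, x ∈ S j

section Groups
variable {ι : Type} [Fintype ι] [DecidableEq ι] {J : Type} {r s k : ℕ}
variable (G : Groups (ι := ι) J r s)

/-- For `s = r + δ - 1`: a set `R` of at most `k` coordinates meeting every group in at most `r`
points extends, inside any `T ⊇ R` with at least `k + δ - 1` points, to such a set of size
exactly `k`. In a maximal extension `Q` with fewer than `k` points, each point of `T \ Q` lies in a
group that `Q` already meets in `r` points. Two such groups would give
`|Q| ≥ 2r - |A| ≥ k`; a single one leaves room for at most `δ - 1` points in `T \ Q`. -/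
theorem Groups.exists_basis_extension (hk : k + G.A.card ≤ 2 * r) {δ : ℕ} (hδ : 1 ≤ δ)
    (hs : s + 1 ≤ r + δ)
    {R T : Finset ι} (hRT : R ⊆ T) (hR : ∀ j, (R ∩ G.S j).card ≤ r) (hRk : R.card ≤ k)
    (hT : k + δ ≤ T.card + 1) :
    ∃ Q, R ⊆ Q ∧ Q ⊆ T ∧ Q.card = k ∧ ∀ j, (Q ∩ G.S j).card ≤ r := by
  classical
  let fam := T.powerset.filter fun Q => R ⊆ Q ∧ Q.card ≤ k ∧ ∀ j, (Q ∩ G.S j).card ≤ r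
  have hne : fam.Nonempty := ⟨R, by simp [fam, hRT, hRk, hR]⟩
  obtain ⟨Q, hQ, hmax⟩ := Finset.exists_max_image fam Finset.card hne
  simp only [fam, Finset.mem_filter, Finset.mem_powerset] at hQ hmax
  obtain ⟨hQT, hRQ, hQk, hQr⟩ := hQ
  refine ⟨Q, hRQ, hQT, ?_, hQr⟩
  by_contra hne
  have hlt : Q.card < k := lt_of_le_of_ne hQk hne
  have htight : ∀ t ∈ T \ Q, ∃ j, t ∈ G.S j ∧ (Q ∩ G.S j).card = r := by
    intro t ht
    rw [Finset.mem_sdiff] at ht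
    by_contra! h
    have hins := hmax (insert t Q) ⟨Finset.insert_subset ht.1 hQT,
      hRQ.trans (Finset.subset_insert _ _), by rw [Finset.card_insert_of_notMem ht.2]; omega, by
        intro j
        by_cases htj : t ∈ G.S j
        · rw [Finset.insert_inter_of_mem htj]
          have := Finset.card_insert_le t (Q ∩ G.S j)
          have := h j htj
          have := hQr j
          omega
        · rw [Finset.insert_inter_of_notMem htj]
          exact hQr j⟩
    rw [Finset.card_insert_of_notMem ht.2] at hins
    omega
  have huniq : ∀ i j, (Q ∩ G.S i).card = r → (Q ∩ G.S j).card = r → i = j := by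
    intro i j hi hj
    by_contra hij
    have h1 := Finset.card_union_add_card_inter (Q ∩ G.S i) (Q ∩ G.S j)
    have h2 : ((Q ∩ G.S i) ∩ (Q ∩ G.S j)).card ≤ G.A.card :=
      Finset.card_le_card (fun x hx => G.inter_sub i j hij (by
        simp only [Finset.mem_inter] at hx ⊢; tauto))
    have h3 : ((Q ∩ G.S i) ∪ (Q ∩ G.S j)).card ≤ Q.card :=
      Finset.card_le_card (Finset.union_subset Finset.inter_subset_left Finset.inter_subset_left)
    omega
  have hTQ := Finset.card_sdiff_add_card_eq_card hQT
  rcases (T \ Q).eq_empty_or_nonempty with h0 | ⟨t, ht⟩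
  · rw [h0, Finset.card_empty] at hTQ
    omega
  · obtain ⟨j, htj, hj⟩ := htight t ht
    have hsub : (T \ Q) ∪ (Q ∩ G.S j) ⊆ G.S j := by
      refine Finset.union_subset ?_ Finset.inter_subset_right
      intro t' ht'
      obtain ⟨j', htj', hj'⟩ := htight t' ht'
      rwa [huniq j j' hj hj']
    have hdis : Disjoint (T \ Q) (Q ∩ G.S j) :=
      Finset.disjoint_of_subset_right Finset.inter_subset_left Finset.sdiff_disjoint
    have h4 := Finset.card_le_card hsub
    rw [Finset.card_union_of_disjoint hdis, G.card_S] at h4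
    omega


/-- Choose an `r`-subset `B j` of each group, containing the core points of the group. Allow a core
point only itself as a partner, and any other point of group `j` all of `B j`. Then `k` coordinates
meeting every group in at most `r` points can be matched to distinct partners. By Hall's theorem it
suffices to count the partners of a subset `Z`: if only group `j` has noncore points in `Z`, they
are at least `r + |Z \ S j|`; if two groups have, then at least `2r - |A| ≥ k`. -/
theorem Groups.exists_matching (hk : k + G.A.card ≤ 2 * r) (hs : r ≤ s) :
    ∃ (B : J → Finset ι) (N : ι → Finset ι), (∀ j, (B j).card = r) ∧
      (∀ j, ∀ i ∈ G.S j, N i ⊆ B j) ∧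
      ∀ q : Fin k → ι, Function.Injective q →
        (∀ j, (Finset.univ.image q ∩ G.S j).card ≤ r) →
        ∃ f : Fin k → ι, Function.Injective f ∧ ∀ c, f c ∈ N (q c) := by
  classical
  have hB : ∀ j, ∃ B, G.S j ∩ G.A ⊆ B ∧ B ⊆ G.S j ∧ B.card = r := fun j =>
    Finset.exists_subsuperset_card_eq Finset.inter_subset_left
      ((Finset.card_le_card Finset.inter_subset_right).trans G.card_A_le)
      (by rw [G.card_S]; exact hs)
  choose B hAB hBS hBr using hB
  choose g hg using G.cover
  let N : ι → Finset ι := fun i => if i ∈ G.A then {i} else B (g i)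
  refine ⟨B, N, hBr, ?_, ?_⟩
  · intro j i hi
    by_cases hiA : i ∈ G.A
    · simp only [N, if_pos hiA, Finset.singleton_subset_iff]
      exact hAB j (Finset.mem_inter.mpr ⟨hi, hiA⟩)
    · simp only [N, if_neg hiA]
      have : g i = j := by
        by_contra h
        exact hiA (G.inter_sub _ _ h (Finset.mem_inter.mpr ⟨hg i, hi⟩))
      rw [this]
  · intro q hq hgood
    refine (Finset.all_card_le_biUnion_card_iff_exists_injective fun c => N (q c)).mp ?_
    intro s'
    rw [← Finset.card_image_of_injective s' hq,
      ← Finset.image_biUnion (f := q) (t := N)]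
    set Z := s'.image q with hZ
    have hZk : Z.card ≤ k := by
      rw [hZ, Finset.card_image_of_injective s' hq]
      simpa using Finset.card_le_univ s'
    have hZg : ∀ j, (Z ∩ G.S j).card ≤ r := fun j =>
      (Finset.card_le_card (Finset.inter_subset_inter_right
        (Finset.image_subset_image (Finset.subset_univ s')))).trans (hgood j)
    have hZA : ∀ i ∈ Z, i ∈ G.A → i ∈ Z.biUnion N := fun i hi hiA =>
      Finset.mem_biUnion.mpr ⟨i, hi, by simp [N, hiA]⟩
    have hZB : ∀ i ∈ Z, i ∉ G.A → B (g i) ⊆ Z.biUnion N := fun i hi hiA x hx =>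
      Finset.mem_biUnion.mpr ⟨i, hi, by simpa [N, hiA] using hx⟩
    by_cases h0 : ∀ i ∈ Z, i ∈ G.A
    · exact Finset.card_le_card fun i hi => hZA i hi (h0 i hi)
    push Not at h0
    obtain ⟨i, hi, hiA⟩ := h0
    by_cases h1 : ∀ i' ∈ Z, i' ∉ G.A → g i' = g i
    · have hsub : B (g i) ∪ (Z \ G.S (g i)) ⊆ Z.biUnion N := by
        refine Finset.union_subset (hZB i hi hiA) ?_
        intro x hx
        rw [Finset.mem_sdiff] at hx
        refine hZA x hx.1 ?_
        by_contra hxA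
        exact hx.2 (h1 x hx.1 hxA ▸ hg x)
      have hdis : Disjoint (B (g i)) (Z \ G.S (g i)) :=
        Finset.disjoint_of_subset_left (hBS _) Finset.disjoint_sdiff
      have h2 := Finset.card_le_card hsub
      rw [Finset.card_union_of_disjoint hdis, hBr] at h2
      have h3 := Finset.card_inter_add_card_sdiff Z (G.S (g i))
      have := hZg (g i)
      omega
    · push Not at h1
      obtain ⟨i', hi', hiA', hne⟩ := h1
      have h2 := Finset.card_le_card (Finset.union_subset (hZB i hi hiA) (hZB i' hi' hiA'))
      have h3 := Finset.card_union_add_card_inter (B (g i)) (B (g i'))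
      have h4 : (B (g i) ∩ B (g i')).card ≤ G.A.card := Finset.card_le_card
        ((Finset.inter_subset_inter (hBS _) (hBS _)).trans (G.inter_sub _ _ hne.symm))
      rw [hBr, hBr] at h3
      omega

/-! ### The optimal code -/

/-- A functional vanishing on `finrank W` or more independent vectors of `W` vanishes on `W`. -/
theorem vanish_of_linearIndepOn {F V κ : Type*} [Field F] [AddCommGroup V] [Module F V]
    [FiniteDimensional F V] {v : κ → V} {R : Finset κ} (hv : LinearIndepOn F v (R : Set κ))
    {W : Submodule F V} (hW : ∀ i ∈ R, v i ∈ W) (hWR : Module.finrank F W ≤ R.card)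
    (φ : V →ₗ[F] F) (hφ : ∀ i ∈ R, φ (v i) = 0) : ∀ w ∈ W, φ w = 0 := by
  have hv' : LinearIndependent F (fun i : R => v i) := hv
  have h1 := finrank_span_eq_card hv'
  have h2 : Submodule.span F (Set.range fun i : R => v i) ≤ W := by
    rw [Submodule.span_le]
    rintro _ ⟨i, rfl⟩
    exact hW i i.2
  have h3 := Submodule.eq_of_le_of_finrank_le h2 (by rw [h1]; simpa using hWR)
  have h4 : W ≤ LinearMap.ker φ := by
    rw [← h3, Submodule.span_le]
    rintro _ ⟨i, rfl⟩
    exact hφ i i.2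
  exact fun w hw => h4 hw

/-- Vectors `v i` in a `k`-dimensional space such that those of each group lie in a subspace spanned
by `r` vectors, while any `k` of them with at most `r` in each group are linearly independent. -/
theorem Groups.exists_matrix (hk : k + G.A.card ≤ 2 * r) (hs : r ≤ s) :
    ∃ p : ℕ, p.Prime ∧ ∃ (v : ι → Fin k → ZMod p) (X : ι → Fin k → ZMod p)
      (B : J → Finset ι), (∀ j, (B j).card = r) ∧
      (∀ j, ∀ i ∈ G.S j, v i ∈ Submodule.span (ZMod p) (X '' (B j : Set ι))) ∧
      ∀ Q : Finset ι, Q.card = k → (∀ j, (Q ∩ G.S j).card ≤ r) →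
        LinearIndepOn (ZMod p) v (Q : Set ι) := by
  classical
  obtain ⟨B, N, hB, hNB, hmatch⟩ := G.exists_matching hk hs
  obtain ⟨p, hp, X, Y, hY, hdet⟩ := exists_prime_matrix k N
  have : Fact p.Prime := ⟨hp⟩
  refine ⟨p, hp, (X * Y).col, X.col, B, hB, ?_, ?_⟩
  · intro j i hi
    have : (X * Y).col i = ∑ l, Y l i • X.col l := by
      ext c
      simp [Matrix.mul_apply, Finset.sum_apply, mul_comm]
    rw [this]
    refine Submodule.sum_mem _ fun l _ => ?_
    by_cases hl : l ∈ N i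
    · exact Submodule.smul_mem _ _ (Submodule.subset_span ⟨l, hNB j i hi hl, rfl⟩)
    · rw [hY l i hl, zero_smul]
      exact Submodule.zero_mem _
  · intro Q hQ hgood
    let e := (Finset.equivFinOfCardEq hQ).symm
    let q : Fin k → ι := fun c => e c
    have hq : Function.Injective q := Subtype.val_injective.comp e.injective
    have himg : Finset.univ.image q = Q := by
      ext x
      simp only [Finset.mem_image, Finset.mem_univ, true_and, q]
      exact ⟨fun ⟨c, hc⟩ => hc ▸ (e c).2, fun hx => ⟨e.symm ⟨x, hx⟩, by simp⟩⟩
    have hd := hdet q (hmatch q hq (by rw [himg]; exact hgood)) hq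
    have hli := Matrix.linearIndependent_cols_of_det_ne_zero hd
    exact (linearIndependent_equiv' e (by rfl)).mp hli

/-- The code `{(φ (v i))ᵢ : φ a functional}` on the vectors of `Groups.exists_matrix` has dimension
`k`, the groups as locality sets, and minimum distance at least `|ι| - k - δ + 2`: a functional
vanishing on `k + δ - 1` of the vectors vanishes on a basis found among them. Similarly, a
functional vanishing on `r` vectors of a group vanishes on the whole group. -/
theorem Groups.exists_code (hk : k + G.A.card = 2 * r) (hrk : r ≤ k) {δ : ℕ} (hδ : 1 ≤ δ)
    (hs : s + 1 = r + δ) (hn : k + δ ≤ Fintype.card ι + 1) :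
    ∃ (F : Type) (_ : Field F) (_ : Fintype F) (_ : DecidableEq F)
        (C : Submodule F (ι → F)),
        Module.finrank F C = k ∧ HasAllSymbolLocality C r δ ∧
        ∀ x ∈ C, ∀ y ∈ C, x ≠ y → Fintype.card ι + 2 ≤ hammingDist x y + k + δ := by
  classical
  obtain ⟨p, hp, v, X, B, hB, hspan, hind⟩ := G.exists_matrix hk.le (by omega)
  have : Fact p.Prime := ⟨hp⟩
  let F := ZMod p
  let enc : Module.Dual F (Fin k → F) →ₗ[F] (ι → F) :=
    LinearMap.pi fun i => LinearMap.applyₗ (v i)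
  have henc : ∀ φ i, enc φ i = φ (v i) := fun φ i => rfl
  have key : ∀ (φ : Module.Dual F (Fin k → F)) (T : Finset ι), k + δ ≤ T.card + 1 →
      (∀ i ∈ T, φ (v i) = 0) → φ = 0 := by
    intro φ T hT hφ
    obtain ⟨Q, -, hQT, hQk, hQ⟩ := G.exists_basis_extension hk.le hδ hs.le
      (Finset.empty_subset T) (by simp) (by simp) hT
    ext1 w
    refine LinearMap.ext fun c => ?_
    exact vanish_of_linearIndepOn (hind Q hQk hQ) (W := ⊤) (fun _ _ => trivial)
      (by simp [hQk]) φ (fun i hi => hφ i (hQT hi)) _ trivial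
  have hinj : Function.Injective enc := by
    refine (injective_iff_map_eq_zero enc).mpr fun φ h => ?_
    exact key φ Finset.univ (by simpa using hn) fun i _ => by rw [← henc, h]; rfl
  refine ⟨F, inferInstanceAs (Field (ZMod p)), inferInstanceAs (Fintype (ZMod p)),
    inferInstanceAs (DecidableEq (ZMod p)), LinearMap.range enc, ?_, ?_, ?_⟩
  · rw [LinearMap.finrank_range_of_inj hinj, Subspace.dual_finrank_eq]
    simp
  · intro i
    obtain ⟨j, hj⟩ := G.cover i
    refine ⟨G.S j, hj, by rw [G.card_S]; omega, ?_⟩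
    rintro _ ⟨φ, rfl⟩ _ ⟨ψ, rfl⟩ ⟨t, ht, hne⟩
    by_contra! hlt
    have hcard := Finset.card_filter_add_card_filter_not (s := G.S j)
      (fun i => enc φ i ≠ enc ψ i)
    rw [G.card_S] at hcard
    unfold projDist at hlt
    obtain ⟨R, hR, hRr⟩ := Finset.exists_subset_card_eq
      (s := (G.S j).filter fun i => ¬ enc φ i ≠ enc ψ i) (n := r) (by omega)
    obtain ⟨Q, hRQ, -, hQk, hQ⟩ := G.exists_basis_extension hk.le hδ hs.le
      (Finset.subset_univ R) (fun h => (Finset.card_le_card Finset.inter_subset_left).trans hRr.le)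
      (by omega) (by simpa using hn)
    have hRS : ∀ i ∈ R, i ∈ G.S j ∧ enc φ i = enc ψ i := fun i hi => by
      simpa using hR hi
    refine hne (sub_eq_zero.mp ?_)
    refine vanish_of_linearIndepOn ((hind Q hQk hQ).mono (by exact_mod_cast hRQ))
      (W := Submodule.span F (X '' (B j : Set ι))) (fun i hi => hspan j i (hRS i hi).1) ?_
      (φ - ψ) (fun i hi => ?_) _ (hspan j t ht)
    · rw [hRr, ← hB j, ← Finset.coe_image]
      exact (finrank_span_finset_le_card _).trans Finset.card_image_le
    · rw [LinearMap.sub_apply, sub_eq_zero]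
      exact (hRS i hi).2
  · rintro _ ⟨φ, rfl⟩ _ ⟨ψ, rfl⟩ hne
    by_contra! hlt
    have hcard := Finset.card_filter_add_card_filter_not (s := (Finset.univ : Finset ι))
      (fun i => enc φ i ≠ enc ψ i)
    unfold hammingDist at hlt
    rw [Finset.card_univ] at hcard
    refine hne (congrArg enc (sub_eq_zero.mp (key (φ - ψ)
      (Finset.univ.filter fun i => ¬ enc φ i ≠ enc ψ i) (by omega) fun i hi => ?_)))
    rw [LinearMap.sub_apply, sub_eq_zero]
    exact not_not.mp (Finset.mem_filter.mp hi).2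

end Groups

/-! ### Existence of the groups -/

theorem sum_min_sub (a N m : ℕ) : ∑ j : Fin m, min a (N - j * a) = min N (m * a) := by
  induction m with
  | zero => simp
  | succ m ih =>
    rw [Fin.sum_univ_castSucc]
    simp only [Fin.val_castSucc, Fin.val_last, ih, add_mul, one_mul]
    omega

/-- Transport of a system of groups along a bijection of the coordinate sets. -/
def Groups.map {ι κ J : Type} [Fintype ι] [DecidableEq ι] [Fintype κ] [DecidableEq κ] {r s : ℕ}
    (G : Groups (ι := ι) J r s) (e : ι ≃ κ) : Groups (ι := κ) J r s where
  A := G.A.map e.toEmbedding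
  S j := (G.S j).map e.toEmbedding
  card_A_le := by rw [Finset.card_map]; exact G.card_A_le
  card_S j := by rw [Finset.card_map, G.card_S]
  inter_sub i j hij := by
    rw [← Finset.map_inter, Finset.map_subset_map]
    exact G.inter_sub i j hij
  cover x := by
    obtain ⟨j, hj⟩ := G.cover (e.symm x)
    exact ⟨j, by simpa using hj⟩

/-- Groups `S j` consisting of the first `f j` points of a core of size `a` together with
`s - f j` points of their own. The core is covered because some `f j₀` equals `a`. -/
theorem exists_groups_sum {a r s m : ℕ} (f : Fin m → ℕ) (hf : ∀ j, f j ≤ a) (har : a ≤ r)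
    (has : a ≤ s) (j₀ : Fin m) (hj₀ : f j₀ = a) :
    ∃ G : Groups (ι := Fin a ⊕ (Σ j : Fin m, Fin (s - f j))) (Fin m) r s, G.A.card = a := by
  refine ⟨⟨Finset.univ.map Function.Embedding.inl,
    fun j => (Finset.univ.filter fun t : Fin a => t < f j).disjSum
      (Finset.univ.map (Function.Embedding.sigmaMk j)), by simpa using har, ?_, ?_, ?_⟩,
    by simp⟩
  · intro j
    have h1 : (Finset.univ.filter fun t : Fin a => (t : ℕ) < f j).card = f j := by
      rw [Fin.card_filter_val_lt]
      exact min_eq_right (hf j)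
    have := hf j
    rw [Finset.card_disjSum, h1, Finset.card_map, Finset.card_univ, Fintype.card_fin]
    omega
  · rintro i j hij (t | ⟨l, t⟩) hx
    · simp
    · simp only [Finset.mem_inter, Finset.inr_mem_disjSum, Finset.mem_map, Finset.mem_univ,
        true_and] at hx
      obtain ⟨⟨_, h1⟩, ⟨_, h2⟩⟩ := hx
      exact absurd ((congrArg Sigma.fst h1).trans (congrArg Sigma.fst h2).symm) hij
  · rintro (t | ⟨l, t⟩)
    · exact ⟨j₀, by simp [hj₀]⟩
    · exact ⟨l, by simp⟩

theorem exists_groups {n a r s m : ℕ} (f : Fin m → ℕ) (hf : ∀ j, f j ≤ a) (har : a ≤ r)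
    (has : a ≤ s) (j₀ : Fin m) (hj₀ : f j₀ = a) (hn : a + ∑ j, (s - f j) = n) :
    ∃ G : Groups (ι := Fin n) (Fin m) r s, G.A.card = a := by
  obtain ⟨G, hG⟩ := exists_groups_sum f hf har has j₀ hj₀
  exact ⟨G.map (Fintype.equivFinOfCardEq (by simp [hn])), (Finset.card_map _).trans hG⟩

/-! ### The generalized Singleton bound -/

/-- The bound `d ≤ n - k - δ + 2`. Take a locality set `S` on which the code is not identically
zero. A codeword vanishing on `|S| - δ + 1 ≤ r` points of `S` vanishes on `S`, so imposing `k - 1`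
zeros, that many of them in `S` and the others outside, produces a nonzero codeword with
`δ - 1` further zeros. -/
theorem minDist_le {n k r δ : ℕ} (hrk : r < k) (hδ : 1 ≤ δ) (hn : k + 2 * (δ - 1) ≤ n)
    {F : Type} [Field F] [DecidableEq F] {C : Submodule F (Fin n → F)} {d : ℕ}
    (hC : Module.finrank F C = k) (hloc : HasAllSymbolLocality C r δ) (hd : IsMinDist C d) :
    d + k + δ ≤ n + 2 := by
  have hbot : C ≠ ⊥ := by
    rintro rfl
    simp at hC
    omega
  obtain ⟨x, hx, hx0⟩ := Submodule.exists_mem_ne_zero_of_ne_bot hbot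
  obtain ⟨i, hi⟩ := Function.ne_iff.mp hx0
  obtain ⟨S, hiS, hSc, hS⟩ := hloc i
  have hSδ : δ ≤ S.card :=
    (hS x hx 0 C.zero_mem ⟨i, hiS, hi⟩).trans (Finset.card_filter_le _ _)
  obtain ⟨R, hRS, hR⟩ := Finset.exists_subset_card_eq (s := S) (n := S.card + 1 - δ) (by omega)
  have hSn : Sᶜ.card = n - S.card := by rw [Finset.card_compl, Fintype.card_fin]
  have hSn' : S.card ≤ n := by simpa using Finset.card_le_univ S
  obtain ⟨E, hES, hE⟩ := Finset.exists_subset_card_eq (s := Sᶜ) (n := k - 1 - R.card) (by omega)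
  have hRE : (R ∪ E).card ≤ k - 1 := (Finset.card_union_le R E).trans (by omega)
  let restr : C →ₗ[F] ((R ∪ E : Finset (Fin n)) → F) :=
    LinearMap.pi fun t => (LinearMap.proj (t : Fin n)).comp C.subtype
  have hker : LinearMap.ker restr ≠ ⊥ := by
    refine LinearMap.ker_ne_bot_of_finrank_lt ?_
    rw [hC, Module.finrank_fintype_fun_eq_card, Fintype.card_coe]
    omega
  obtain ⟨⟨z, hzC⟩, hzker, hz0⟩ := Submodule.exists_mem_ne_zero_of_ne_bot hker
  have hz0 : z ≠ 0 := fun h => hz0 (Subtype.ext h)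
  have hz : ∀ t ∈ R ∪ E, z t = 0 := fun t ht => congrFun (LinearMap.mem_ker.mp hzker) ⟨t, ht⟩
  have hzS : ∀ t ∈ S, z t = 0 := by
    by_contra! h
    have h1 := hS z hzC 0 C.zero_mem h
    have h2 : projDist S z 0 ≤ (S \ R).card := by
      refine Finset.card_le_card fun t ht => ?_
      rw [Finset.mem_filter] at ht
      rw [Finset.mem_sdiff]
      exact ⟨ht.1, fun htR => ht.2 (hz t (Finset.mem_union_left _ htR))⟩
    rw [Finset.card_sdiff_of_subset hRS] at h2
    omega
  have h1 := hd.2 z hzC 0 C.zero_mem hz0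
  have h2 : hammingDist z 0 ≤ (Sᶜ \ E).card := by
    refine Finset.card_le_card fun t ht => ?_
    have ht : z t ≠ 0 := (Finset.mem_filter.mp ht).2
    rw [Finset.mem_sdiff, Finset.mem_compl]
    exact ⟨fun h => ht (hzS t h), fun h => ht (hz t (Finset.mem_union_right _ h))⟩
  rw [Finset.card_sdiff_of_subset hES] at h2
  omega

theorem exists_isMinDist {ι F : Type} [Fintype ι] [DecidableEq ι] [Field F] [DecidableEq F]
    {C : Submodule F (ι → F)} (hC : C ≠ ⊥) : ∃ d, IsMinDist C d := by
  classical
  obtain ⟨x, hx, hx0⟩ := Submodule.exists_mem_ne_zero_of_ne_bot hC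
  have h : ∃ d, ∃ x ∈ C, ∃ y ∈ C, x ≠ y ∧ hammingDist x y = d :=
    ⟨_, x, hx, 0, C.zero_mem, hx0, rfl⟩
  exact ⟨Nat.find h, Nat.find_spec h, fun x hx y hy hxy =>
    Nat.find_min' h ⟨x, hx, y, hy, hxy, rfl⟩⟩

end PerfectLRC

/-- For `⌈k/r⌉ = 2` and `b > a ≥ ⌈k/r⌉ - 1`, if `⌈n/(r+δ-1)⌉ ≥ ⌈b/a⌉ + 1`, then the
maximal achievable minimum distance of linear `(n,k,r,δ)`-LRCs equals the generalized
Singleton bound `n - k + 1 - (⌈k/r⌉ - 1)(δ - 1)`: some linear LRC attains it, and no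
linear LRC exceeds it. -/
theorem exists_perfect_LRC_kr2
    (n k r δ : ℕ) (hr : 0 < r) (hrk : r < k)
    (hkn : (k : ℤ) ≤ (n : ℤ) - ⌈(k : ℚ) / (r : ℚ)⌉ * ((δ : ℤ) - 1))
    (hδ : 2 ≤ δ)
    (a b : ℤ)
    (ha : a = (r : ℤ) * ⌈(k : ℚ) / (r : ℚ)⌉ - (k : ℤ))
    (hb : b = ((r : ℤ) + (δ : ℤ) - 1) * ⌈(n : ℚ) / ((r : ℚ) + (δ : ℚ) - 1)⌉ - (n : ℤ))
    (hba : a < b)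
    (hakr : ⌈(k : ℚ) / (r : ℚ)⌉ - 1 ≤ a)
    (hkr2 : ⌈(k : ℚ) / (r : ℚ)⌉ = 2)
    (hnm : ⌈(b : ℚ) / (a : ℚ)⌉ + 1 ≤ ⌈(n : ℚ) / ((r : ℚ) + (δ : ℚ) - 1)⌉) :
    (∃ (F : Type) (_ : Field F) (_ : Fintype F) (_ : DecidableEq F)
        (C : Submodule F (Fin n → F)) (d : ℕ),
        Module.finrank F C = k ∧ HasAllSymbolLocality C r δ ∧ IsMinDist C d ∧
        (d : ℤ) = (n : ℤ) - (k : ℤ) + 1 - (⌈(k : ℚ) / (r : ℚ)⌉ - 1) * ((δ : ℤ) - 1)) ∧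
    (∀ (F : Type) (_ : Field F) (_ : Fintype F) (_ : DecidableEq F)
        (C : Submodule F (Fin n → F)) (d : ℕ),
        Module.finrank F C = k → HasAllSymbolLocality C r δ → IsMinDist C d →
        (d : ℤ) ≤ (n : ℤ) - (k : ℤ) + 1 - (⌈(k : ℚ) / (r : ℚ)⌉ - 1) * ((δ : ℤ) - 1)) := by
  rw [hkr2] at hkn ha hakr ⊢
  -- `m` is the number of locality groups of size `s = r + δ - 1`.
  set m := ⌈(n : ℚ) / ((r : ℚ) + (δ : ℚ) - 1)⌉ with hm
  have hbm : a + b ≤ m * a := by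
    have ha0 : (0 : ℚ) < a := by exact_mod_cast (by omega : 0 < a)
    have h1 : ⌈(b : ℚ) / (a : ℚ)⌉ ≤ m - 1 := by omega
    rw [Int.ceil_le, div_le_iff₀ ha0] at h1
    have h2 : b ≤ (m - 1) * a := by exact_mod_cast h1
    linarith
  clear_value m
  have hn : k + 2 * (δ - 1) ≤ n := by omega
  have hup : ∀ (F : Type) (_ : Field F) (_ : DecidableEq F)
      (C : Submodule F (Fin n → F)) (d : ℕ),
      Module.finrank F C = k → HasAllSymbolLocality C r δ → IsMinDist C d →
      d + k + δ ≤ n + 2 := fun F _ _ C d hC hloc hd =>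
    PerfectLRC.minDist_le hrk (by omega) hn hC hloc hd
  refine ⟨?_, fun F _ _ _ C d hC hloc hd => ?_⟩
  · have hm0 : 0 < m := by
      by_contra! h
      nlinarith
    lift a to ℕ using by omega
    lift b to ℕ using by omega
    lift m to ℕ using hm0.le
    obtain ⟨s, hs⟩ : ∃ s, s + 1 = r + δ := ⟨r + δ - 1, by omega⟩
    have hs' : (r : ℤ) + δ - 1 = s := by omega
    rw [hs'] at hb
    have hbm' : a + b ≤ m * a := by exact_mod_cast hbm
    have hb' : b + n = s * m := by
      have : (b : ℤ) + n = s * m := by omega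
      exact_mod_cast this
    have hmpos : 0 < m := by omega
    -- A greedy splitting of `a + b` into `m` parts of size at most `a`, the first equal to `a`.
    let f : Fin m → ℕ := fun j => min a (a + b - j * a)
    have hf : ∀ j, f j ≤ a := fun j => min_le_left _ _
    have hsum : a + ∑ j, (s - f j) = n := by
      have h1 : ∑ j, (s - f j) + ∑ j, f j = s * m := by
        rw [← Finset.sum_add_distrib, Finset.sum_congr rfl fun j _ =>
          Nat.sub_add_cancel ((hf j).trans (by omega : a ≤ s))]
        simp [mul_comm]
      have h2 : ∑ j, f j = a + b :=
        (PerfectLRC.sum_min_sub a (a + b) m).trans (min_eq_left hbm')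
      omega
    obtain ⟨G, hG⟩ := PerfectLRC.exists_groups (r := r) f hf (by omega) (by omega)
      ⟨0, hmpos⟩ (by simp [f]) hsum
    obtain ⟨F, i1, i2, i3, C, hC, hloc, hlow⟩ := G.exists_code (k := k) (δ := δ)
      (by omega) hrk.le (by omega) hs (by rw [Fintype.card_fin]; omega)
    have hbot : C ≠ ⊥ := by
      rintro rfl
      rw [finrank_bot] at hC
      omega
    obtain ⟨d, hd⟩ := PerfectLRC.exists_isMinDist hbot
    refine ⟨F, i1, i2, i3, C, d, hC, hloc, hd, ?_⟩
    have h1 := hup F i1 i3 C d hC hloc hd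
    obtain ⟨⟨x, hx, y, hy, hxy, rfl⟩, -⟩ := hd
    have h2 := hlow x hx y hy hxy
    rw [Fintype.card_fin] at h2
    omega
  · have := hup F _ _ C d hC hloc hd
    omega
end

section
/- Let n, k, r, δ be integers with 0 < r < k ≤ n − ⌈k/r⌉(δ − 1) and δ ≥ 2. Set a = r⌈k/r⌉ − k, b = (r+δ−1)⌈n/(r+δ−1)⌉ − n, m = ⌈n/(r+δ−1)⌉ − 1, and v = r + δ − 1 − b − ⌊(r+δ−1−b)/m⌋·m. Assume b > a and δ − 1 ≤ (⌈k/r⌉ − 1)⌊(r+δ−1−b)/m⌋ + min{v, ⌈k/r⌉ − 1}. Then there exists a finite field F and a linear code C over F of length n, dimension k, with all-symbol locality (r,δ), whose minimum distance is at least n − k + 1 − ⌈k/r⌉(δ − 1). -/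
/-!
The coordinates are partitioned into intervals of length `q = r + δ - 1`, where the last interval
has length `t` with `δ ≤ t ≤ q + δ - 1`. Group `j` receives a Reed–Solomon code of dimension
`ρ j`: this is `r` for an ordinary group, and `min r (t - δ + 1)` for the last one, so each group
contains enough coordinates for any `ρ j + δ - 1` of them to form an `(r, δ)`-locality set
(`hasAllSymbolLocality_of_le_groupRS`). The code is a generic `k`-dimensional subspace of the
product of these local codes.

By Lagrange interpolation, the words of the product that vanish on a `k`-set `T` meeting each
group in at most `ρ j` coordinates form a subspace of codimension `k`. Over a large finite field
some `k`-dimensional subspace is transverse to all these subspaces at once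
(`exists_disjoint_of_card_lt`). It remains to see that every set of `k + ⌈k/r⌉(δ - 1)` coordinates
contains such a `T`: a nonzero codeword then has fewer zeros than that, which is the bound on
the distance. This is a count (`exists_subset_card_eq_of_groups`, `capacity_or_excess`): if the
groups meeting the set in more than `ρ j` coordinates have total capacity less than `k`, they
waste at most `⌈k/r⌉(δ - 1)` coordinates.
-/

open scoped BigOperators

/-! ### Products of local Reed–Solomon codes -/

open Polynomial in
/-- The ambient code: the words whose restriction to each group `g ⁻¹ {j}` is the evaluation,
at the points `α i`, of some polynomial of degree less than `ρ j`. Every group carries a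
Reed–Solomon code of dimension `min (ρ j) |g ⁻¹ {j}|`, provided the points `α i` are distinct. -/
def groupRS {ι F : Type} [Field F] (g : ι → ℕ) (ρ : ℕ → ℕ) (α : ι → F) :
    Submodule F (ι → F) where
  carrier := {x | ∃ p : ℕ → F[X], (∀ j, (p j).degree < ρ j) ∧ ∀ i, x i = (p (g i)).eval (α i)}
  zero_mem' := ⟨0, fun j => by simp, fun i => by simp⟩
  add_mem' := by
    rintro x y ⟨p, hp, hx⟩ ⟨q, hq, hy⟩
    refine ⟨p + q, fun j => ?_, fun i => by simp [hx, hy]⟩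
    exact lt_of_le_of_lt (degree_add_le _ _) (max_lt (hp j) (hq j))
  smul_mem' := by
    rintro c x ⟨p, hp, hx⟩
    refine ⟨c • p, fun j => ?_, fun i => by simp [hx]⟩
    exact lt_of_le_of_lt (degree_smul_le _ _) (hp j)

/-- Lagrange interpolation in each group: the ambient code takes arbitrary values on a set that
meets each group in at most `ρ j` coordinates. -/
lemma groupRS_exists_eq {ι F : Type} [DecidableEq ι] [Field F] (g : ι → ℕ) (ρ : ℕ → ℕ)
    (α : ι → F) (hα : Function.Injective α) (T : Finset ι)
    (hT : ∀ j, (T.filter fun i => g i = j).card ≤ ρ j) (y : ι → F) :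
    ∃ x ∈ groupRS g ρ α, ∀ i ∈ T, x i = y i := by
  refine ⟨_, ⟨fun j => Lagrange.interpolate (T.filter fun i => g i = j) α y, fun j => ?_,
    fun i => rfl⟩, fun i hi => ?_⟩
  · exact lt_of_lt_of_le (Lagrange.degree_interpolate_lt _ hα.injOn) (by exact_mod_cast hT j)
  · exact Lagrange.eval_interpolate_at_node _ hα.injOn (by simp [hi])

/-- A word of the ambient code that vanishes at `ρ j` coordinates of group `j` vanishes on the
whole group. -/
lemma groupRS_eq_zero {ι F : Type} [DecidableEq ι] [Field F] (g : ι → ℕ) (ρ : ℕ → ℕ)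
    (α : ι → F) (hα : Function.Injective α) {x : ι → F} (hx : x ∈ groupRS g ρ α) (j : ℕ)
    (Z : Finset ι) (hZ : ∀ i ∈ Z, g i = j ∧ x i = 0) (hc : ρ j ≤ Z.card) (i : ι) (hi : g i = j) :
    x i = 0 := by
  obtain ⟨p, hp, hx⟩ := hx
  have : p j = 0 := by
    refine Polynomial.eq_zero_of_degree_lt_of_eval_index_eq_zero Z hα.injOn
      (lt_of_lt_of_le (hp j) (by exact_mod_cast hc)) fun i hi => ?_
    obtain ⟨h1, h2⟩ := hZ i hi
    rw [hx, h1] at h2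
    exact h2
  rw [hx, hi, this, Polynomial.eval_zero]

/-! ### Generic subspaces over a finite field -/

/-- A vector space over a field with `q` elements is not the union of fewer than `q` proper
subspaces, because each of them contains at most a `1 / q` share of the vectors. -/
lemma exists_forall_notMem_of_card_lt {F V ι : Type} [Field F] [Fintype F] [AddCommGroup V]
    [Module F V] [Module.Finite F V] [Fintype ι] (W : ι → Submodule F V) (hW : ∀ i, W i ≠ ⊤)
    (hc : Fintype.card ι < Fintype.card F) : ∃ x, ∀ i, x ∉ W i := by
  classical
  by_contra! h
  have : Finite V := Module.finite_of_finite F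
  have := Fintype.ofFinite V
  have h1 : Fintype.card V ≤ ∑ i, Fintype.card (W i) := by
    calc Fintype.card V = (Finset.univ.biUnion fun i : ι =>
            Finset.univ.filter fun x => x ∈ W i).card := by
          rw [← Finset.card_univ]
          congr 1
          ext x
          simpa using h x
      _ ≤ ∑ i, (Finset.univ.filter fun x => x ∈ W i).card := Finset.card_biUnion_le
      _ = _ := by
          refine Finset.sum_congr rfl fun i _ => ?_
          rw [Fintype.card_subtype]
  have h2 : ∀ i, Fintype.card (W i) * Fintype.card F ≤ Fintype.card V := by
    intro i
    rw [Module.card_eq_pow_finrank (K := F) (V := W i),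
      Module.card_eq_pow_finrank (K := F) (V := V), ← pow_succ]
    exact Nat.pow_le_pow_right Fintype.card_pos (Submodule.finrank_lt (hW i))
  have h3 : Fintype.card V * Fintype.card F ≤ Fintype.card ι * Fintype.card V := by
    calc _ ≤ (∑ i, Fintype.card (W i)) * Fintype.card F := Nat.mul_le_mul_right _ h1
      _ = ∑ i, Fintype.card (W i) * Fintype.card F := Finset.sum_mul ..
      _ ≤ ∑ _i : ι, Fintype.card V := Finset.sum_le_sum fun i _ => h2 i
      _ = _ := by simp
  rw [mul_comm] at h3
  exact absurd (Nat.le_of_mul_le_mul_right h3 Fintype.card_pos) (by omega)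

/-- Over a large finite field some `k`-dimensional subspace is transverse to finitely many given
subspaces of codimension at least `k`; it is built one basis vector at a time. -/
lemma exists_disjoint_of_card_lt {F V ι : Type} [Field F] [Fintype F] [AddCommGroup V]
    [Module F V] [Module.Finite F V] [Fintype ι] [Nonempty ι] (W : ι → Submodule F V)
    (hc : Fintype.card ι < Fintype.card F) (k : ℕ)
    (hW : ∀ i, Module.finrank F (W i) + k ≤ Module.finrank F V) :
    ∃ C : Submodule F V, Module.finrank F C = k ∧ ∀ i, Disjoint C (W i) := by
  induction k with
  | zero => exact ⟨⊥, by simp, fun i => disjoint_bot_left⟩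
  | succ k ih =>
    obtain ⟨C, hC, hd⟩ := ih fun i => by have := hW i; omega
    obtain ⟨x, hx⟩ := exists_forall_notMem_of_card_lt (fun i => C ⊔ W i) (fun i h => by
      have h1 := Submodule.finrank_add_le_finrank_add_finrank C (W i)
      have h2 := hW i
      rw [h, finrank_top] at h1
      omega) hc
    have hxC : x ∉ C := fun h =>
      hx (Classical.arbitrary ι) (Submodule.mem_sup_left h)
    refine ⟨C ⊔ F ∙ x, ?_, fun i => ?_⟩
    · have hdis : C ⊓ F ∙ x = ⊥ := by
        rw [← disjoint_iff, Submodule.disjoint_span_singleton]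
        exact fun h => absurd h hxC
      have h1 := Submodule.finrank_sup_add_finrank_inf_eq C (F ∙ x)
      rw [hdis, finrank_bot, finrank_span_singleton (by rintro rfl; exact hxC C.zero_mem), hC] at h1
      simpa using h1
    · rw [Submodule.disjoint_def]
      intro z hz hzW
      obtain ⟨c, hcC, w, hw, rfl⟩ := Submodule.mem_sup.1 hz
      obtain ⟨t, rfl⟩ := Submodule.mem_span_singleton.1 hw
      by_cases ht : t = 0
      · subst ht
        rw [zero_smul, add_zero] at hzW ⊢
        exact (Submodule.disjoint_def.1 (hd i)) c hcC hzW
      · refine absurd ?_ (hx i)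
        have h1 : t • x ∈ C ⊔ W i := by
          have : t • x = -c + (c + t • x) := by abel
          rw [this]
          exact Submodule.add_mem_sup (C.neg_mem hcC) hzW
        exact ((C ⊔ W i).smul_mem_iff ht).1 h1

/-! ### Independent coordinates for a given partition -/

/-- A set of `k + e` coordinates has rank at least `k` in the matroid in which each group
contributes at most `ρ j`. The groups that meet `S` in more than `ρ j` coordinates either
contribute `k` already, or they exceed their capacities by at most `e` in total. -/
lemma exists_subset_card_eq_of_groups {ι : Type} [DecidableEq ι] [Fintype ι]
    (g : ι → ℕ) (ρ : ℕ → ℕ) (k e : ℕ)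
    (h3 : ∀ J : Finset ℕ, k ≤ ∑ j ∈ J, ρ j ∨
      ∑ j ∈ J, (Finset.univ.filter fun i => g i = j).card ≤ ∑ j ∈ J, ρ j + e)
    (S : Finset ι) (hS : k + e ≤ S.card) :
    ∃ T ⊆ S, T.card = k ∧ ∀ j, (T.filter fun i => g i = j).card ≤ ρ j := by
  have hex : ∀ j, ∃ U ⊆ S.filter (fun i => g i = j),
      U.card = min (ρ j) (S.filter fun i => g i = j).card := fun j =>
    Finset.exists_subset_card_eq (min_le_right _ _)
  choose U hU hUc using hex
  have hUS : (S.image g).biUnion U ⊆ S := by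
    intro i hi
    obtain ⟨j, -, hj⟩ := Finset.mem_biUnion.1 hi
    exact (Finset.mem_filter.1 (hU j hj)).1
  have hUg : ∀ j, ∀ i ∈ U j, g i = j := fun j i hi => (Finset.mem_filter.1 (hU j hi)).2
  have hcard : ((S.image g).biUnion U).card =
      ∑ j ∈ S.image g, min (ρ j) (S.filter fun i => g i = j).card := by
    rw [Finset.card_biUnion]
    · exact Finset.sum_congr rfl fun j _ => hUc j
    · intro j _ j' _ hne
      rw [Function.onFun_apply, Finset.disjoint_left]
      exact fun i h1 h2 => hne ((hUg j i h1).symm.trans (hUg j' i h2))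
  have hk : k ≤ ((S.image g).biUnion U).card := by
    rw [hcard]
    rw [Finset.card_eq_sum_card_image g S] at hS
    rw [← Finset.sum_filter_add_sum_filter_not (S.image g)
      (fun j => ρ j < (S.filter fun i => g i = j).card)] at hS ⊢
    have e1 : ∑ j ∈ (S.image g).filter (fun j => ρ j < (S.filter fun i => g i = j).card),
        min (ρ j) (S.filter fun i => g i = j).card =
        ∑ j ∈ (S.image g).filter (fun j => ρ j < (S.filter fun i => g i = j).card), ρ j :=
      Finset.sum_congr rfl fun j hj => min_eq_left (Finset.mem_filter.1 hj).2.le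
    have e2 : ∑ j ∈ (S.image g).filter (fun j => ¬ ρ j < (S.filter fun i => g i = j).card),
        min (ρ j) (S.filter fun i => g i = j).card =
        ∑ j ∈ (S.image g).filter (fun j => ¬ ρ j < (S.filter fun i => g i = j).card),
          (S.filter fun i => g i = j).card :=
      Finset.sum_congr rfl fun j hj => min_eq_right (not_lt.1 (Finset.mem_filter.1 hj).2)
    rw [e1, e2]
    have e3 : ∑ j ∈ (S.image g).filter (fun j => ρ j < (S.filter fun i => g i = j).card),
        (S.filter fun i => g i = j).card ≤
        ∑ j ∈ (S.image g).filter (fun j => ρ j < (S.filter fun i => g i = j).card),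
          (Finset.univ.filter fun i => g i = j).card :=
      Finset.sum_le_sum fun j _ =>
        Finset.card_le_card (Finset.filter_subset_filter _ (Finset.subset_univ _))
    rcases h3 ((S.image g).filter fun j => ρ j < (S.filter fun i => g i = j).card) with h | h <;>
      omega
  obtain ⟨T, hT, hTc⟩ := Finset.exists_subset_card_eq hk
  refine ⟨T, hT.trans hUS, hTc, fun j => ?_⟩
  refine le_trans (Finset.card_le_card (t := U j) fun i hi => ?_)
    ((hUc j).le.trans (min_le_left _ _))
  obtain ⟨hiT, hij⟩ := Finset.mem_filter.1 hi
  obtain ⟨j', -, hj'⟩ := Finset.mem_biUnion.1 (hT hiT)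
  have : j' = j := (hUg j' i hj').symm.trans hij
  exact this ▸ hj'

/-! ### The code attached to a partition -/

/-- Each group with at least `ρ j + δ - 1` coordinates, where `ρ j ≤ r`, is covered by
`(r, δ)`-locality sets: any `ρ j + δ - 1` of its coordinates form one. -/
lemma hasAllSymbolLocality_of_le_groupRS {ι F : Type} [Fintype ι] [DecidableEq ι] [Field F]
    [DecidableEq F] (g : ι → ℕ) (ρ : ℕ → ℕ) (α : ι → F) (hα : Function.Injective α)
    (r δ : ℕ) (hδ : 2 ≤ δ) (h1 : ∀ j, ρ j ≤ r)
    (h2 : ∀ i, ρ (g i) + δ ≤ (Finset.univ.filter fun i' => g i' = g i).card + 1)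
    (C : Submodule F (ι → F)) (hC : C ≤ groupRS g ρ α) : HasAllSymbolLocality C r δ := by
  intro i
  have hi2 := h2 i
  obtain ⟨S, hiS, hSg, hSc⟩ := Finset.exists_subsuperset_card_eq (n := ρ (g i) + δ - 1)
    (s := {i}) (t := Finset.univ.filter fun i' => g i' = g i) (by simp)
    (by rw [Finset.card_singleton]; omega) (by omega)
  have hS : ∀ i' ∈ S, g i' = g i := fun i' hi' => (Finset.mem_filter.1 (hSg hi')).2
  refine ⟨S, hiS (by simp), ?_, fun x hx y hy hne => ?_⟩
  · have := h1 (g i)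
    omega
  · by_contra hlt
    obtain ⟨i', hi', hne⟩ := hne
    have hsplit := Finset.card_filter_add_card_filter_not (s := S) (fun i => x i ≠ y i)
    have := groupRS_eq_zero g ρ α hα (hC (C.sub_mem hx hy)) (g i)
      (S.filter fun i => ¬ x i ≠ y i)
      (fun l hl => by
        obtain ⟨hl1, hl2⟩ := Finset.mem_filter.1 hl
        exact ⟨hS l hl1, by simpa [sub_eq_zero] using hl2⟩)
      (by unfold projDist at hlt; omega) i' (hS i' hi')
    exact hne (sub_eq_zero.1 this)

/-- A generic `k`-dimensional subcode of the ambient code: a nonzero codeword does not vanish on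
any `k`-set meeting each group in at most `ρ j` coordinates, hence has fewer than `k + e`
zeros. -/
lemma exists_code_of_groups {ι : Type} [DecidableEq ι] [Fintype ι]
    (g : ι → ℕ) (ρ : ℕ → ℕ) (r δ k e : ℕ) (hδ : 2 ≤ δ) (h1 : ∀ j, ρ j ≤ r)
    (h2 : ∀ i, ρ (g i) + δ ≤ (Finset.univ.filter fun i' => g i' = g i).card + 1)
    (h3 : ∀ J : Finset ℕ, k ≤ ∑ j ∈ J, ρ j ∨
      ∑ j ∈ J, (Finset.univ.filter fun i => g i = j).card ≤ ∑ j ∈ J, ρ j + e)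
    (h4 : k + e ≤ Fintype.card ι)
    {F : Type} [Field F] [Fintype F] [DecidableEq F] (hF : 2 ^ Fintype.card ι < Fintype.card F) :
    ∃ C : Submodule F (ι → F), Module.finrank F C = k ∧ HasAllSymbolLocality C r δ ∧
      ∀ x ∈ C, ∀ y ∈ C, x ≠ y → Fintype.card ι + 1 ≤ hammingDist x y + k + e := by
  have hαe : Fintype.card ι ≤ Fintype.card F := Nat.lt_two_pow_self.le.trans hF.le
  obtain ⟨⟨α, hα⟩⟩ := Function.Embedding.nonempty_of_card_le hαe
  let V := groupRS g ρ α
  let Good := {T : Finset ι // T.card = k ∧ ∀ j, (T.filter fun i => g i = j).card ≤ ρ j}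
  have hgood := exists_subset_card_eq_of_groups g ρ k e h3
  have : Fintype Good := Fintype.ofFinite _
  have : Nonempty Good := by
    obtain ⟨T, -, hT⟩ := hgood Finset.univ (by simpa using h4)
    exact ⟨⟨T, hT⟩⟩
  -- Restriction of a word of the ambient code to the coordinates in `T`.
  let res : (T : Finset ι) → V →ₗ[F] (T → F) := fun T =>
    (LinearMap.funLeft F F (Subtype.val : T → ι)) ∘ₗ V.subtype
  have hres : ∀ T : Good, LinearMap.range (res T.1) = ⊤ := by
    intro T
    rw [LinearMap.range_eq_top]
    intro y
    obtain ⟨x, hx, hxy⟩ := groupRS_exists_eq g ρ α hα T.1 T.2.2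
      (fun i => if h : i ∈ T.1 then y ⟨i, h⟩ else 0)
    refine ⟨⟨x, hx⟩, funext fun i => ?_⟩
    have := hxy i i.2
    simpa [res, LinearMap.funLeft] using this
  obtain ⟨C, hCk, hCd⟩ := exists_disjoint_of_card_lt (fun T : Good => LinearMap.ker (res T.1))
    (by
      refine lt_of_le_of_lt (Fintype.card_le_of_injective (Subtype.val : Good → Finset ι)
        Subtype.val_injective) ?_
      simpa using hF) k
    (fun T => by
      have h := LinearMap.finrank_range_add_finrank_ker (res T.1)
      rw [hres T, finrank_top, Module.finrank_fintype_fun_eq_card, Fintype.card_coe, T.2.1] at h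
      omega)
  refine ⟨C.map V.subtype, ?_, ?_, ?_⟩
  · rw [Submodule.finrank_map_subtype_eq, hCk]
  · exact hasAllSymbolLocality_of_le_groupRS g ρ α hα r δ hδ h1 h2 _ (V.map_subtype_le C)
  · intro x hx y hy hne
    by_contra hlt
    have hsplit := Finset.card_filter_add_card_filter_not (s := (Finset.univ : Finset ι))
      (fun i => x i ≠ y i)
    have hd : hammingDist x y = (Finset.univ.filter fun i => x i ≠ y i).card := rfl
    rw [Finset.card_univ] at hsplit
    obtain ⟨T, hTS, hT⟩ := hgood (Finset.univ.filter fun i => ¬ x i ≠ y i) (by omega)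
    obtain ⟨c, hc, rfl⟩ := hx
    obtain ⟨c', hc', rfl⟩ := hy
    have := Submodule.disjoint_def.1 (hCd ⟨T, hT⟩) (c - c') (C.sub_mem hc hc') (by
      rw [LinearMap.mem_ker]
      funext i
      have := hTS i.2
      simpa [res, LinearMap.funLeft, sub_eq_zero] using this)
    exact hne (by rw [sub_eq_zero.1 this])

/-! ### The partition into intervals -/

/-- Group sizes for the partition of `n` coordinates into `M` intervals of length `q` and a last
one, of index `M`, that takes the remaining `t` coordinates; `t` may exceed `q`. -/
lemma card_filter_min_div (n q M t : ℕ) (hq : 0 < q) (hn : n = q * M + t) (j : ℕ) :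
    (Finset.univ.filter fun i : Fin n => min (i.val / q) M = j).card =
      if j < M then q else if j = M then t else 0 := by
  have hcard : (Finset.univ.filter fun i : Fin n => min (i.val / q) M = j).card =
      ((Finset.range n).filter fun i => min (i / q) M = j).card := by
    rw [← Nat.Iio_eq_range, ← Fin.map_valEmbedding_univ, Finset.filter_map, Finset.card_map]
    rfl
  rw [hcard]
  split_ifs with hj hj'
  · have : (Finset.range n).filter (fun i => min (i / q) M = j) =
        Finset.Ico (j * q) ((j + 1) * q) := by
      ext i
      have hle : (j + 1) * q ≤ q * M := by
        rw [mul_comm q]; exact Nat.mul_le_mul_right _ hj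
      have h1 := Nat.div_eq_iff (x := i) (y := j) hq
      simp only [Finset.mem_filter, Finset.mem_range, Finset.mem_Ico, Nat.add_mul, one_mul] at *
      constructor
      · rintro ⟨-, h⟩
        have : i / q = j := by omega
        omega
      · intro h
        have : i / q = j := by omega
        omega
    rw [this, Nat.card_Ico, Nat.add_mul]
    omega
  · have : (Finset.range n).filter (fun i => min (i / q) M = j) = Finset.Ico (M * q) n := by
      ext i
      have h1 := Nat.le_div_iff_mul_le (x := M) (y := i) hq
      simp only [Finset.mem_filter, Finset.mem_range, Finset.mem_Ico] at *
      omega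
    rw [this, Nat.card_Ico, hn, mul_comm q]
    omega
  · rw [Finset.card_eq_zero, Finset.filter_eq_empty_iff]
    intro i _
    omega

/-- The hypothesis of `exists_subset_card_eq_of_groups` for interval groups of length `r + δ - 1`,
with a last group `M` of length `t`. With `c` ordinary groups in `J`, their capacity
`c * r` reaches `k` once `c ≥ K`. A last group of length at most `r + δ - 1` wastes
`δ - 1` coordinates like any other; a longer one wastes at most `2 * (δ - 1)`, but has
full capacity `r`. -/
lemma capacity_or_excess (r δ k K M t : ℕ) (hδ : 2 ≤ δ) (hK : k ≤ K * r) (hδt : δ ≤ t)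
    (ht : t + 1 ≤ r + δ - 1 + δ) (σ : ℕ → ℕ)
    (hσ : ∀ j, j ≠ M → σ j ≤ r + δ - 1) (hσM : σ M = t) (J : Finset ℕ) :
    k ≤ ∑ j ∈ J, (if j = M then min r (t + 1 - δ) else r) ∨
      ∑ j ∈ J, σ j ≤ ∑ j ∈ J, (if j = M then min r (t + 1 - δ) else r) + K * (δ - 1) := by
  obtain ⟨D, rfl⟩ : ∃ D, δ = D + 1 := ⟨δ - 1, by omega⟩
  have hD : D + 1 - 1 = D := rfl
  rw [hD]
  have hρ : ∑ j ∈ J.erase M, (if j = M then min r (t + 1 - (D + 1)) else r) =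
      (J.erase M).card * r := by
    rw [Finset.sum_congr rfl fun j hj => if_neg (Finset.ne_of_mem_erase hj)]
    simp
  have hs : ∑ j ∈ J.erase M, σ j ≤ (J.erase M).card * r + (J.erase M).card * D := by
    rw [← mul_add, ← smul_eq_mul]
    exact Finset.sum_le_card_nsmul _ _ _ fun j hj => hσ j (Finset.ne_of_mem_erase hj)
  have hmono : ∀ x y : ℕ, x ≤ y → x * D ≤ y * D := fun x y h => Nat.mul_le_mul_right _ h
  have hmono' : ∀ x y : ℕ, x ≤ y → x * r ≤ y * r := fun x y h => Nat.mul_le_mul_right _ h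
  generalize (J.erase M).card = c at hρ hs
  by_cases hM : M ∈ J
  · rw [← Finset.add_sum_erase J _ hM, ← Finset.add_sum_erase J σ hM, hρ, hσM, if_pos rfl]
    by_cases hc : K ≤ c
    · left
      have := hmono' _ _ hc
      omega
    · by_cases htq : t ≤ r + D
      · right
        have := hmono (c + 1) K (by omega)
        rw [add_mul, one_mul] at this
        omega
      · by_cases hc' : K ≤ c + 1
        · left
          have := hmono' _ _ hc'
          rw [add_mul, one_mul] at this
          omega
        · right
          have := hmono (c + 2) K (by omega)
          rw [add_mul] at this
          omega
  · rw [Finset.erase_eq_of_notMem hM] at hρ hs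
    rw [hρ]
    by_cases hc : K ≤ c
    · left
      have := hmono' _ _ hc
      omega
    · right
      have := hmono c K (by omega)
      omega

/-- Lower bound for the maximal minimum distance of linear `(n,k,r,δ)`-LRCs, first case:
if `δ - 1 ≤ (⌈k/r⌉ - 1)⌊(r+δ-1-b)/m⌋ + min{v, ⌈k/r⌉ - 1}`, then there is a linear
`(n,k,r,δ)`-LRC with minimum distance at least `n - k + 1 - ⌈k/r⌉(δ - 1)`. -/
theorem dmax_lower_bound_case1
    (n k r δ : ℕ) (hr : 0 < r) (hrk : r < k)
    (hkn : (k : ℤ) ≤ (n : ℤ) - ⌈(k : ℚ) / (r : ℚ)⌉ * ((δ : ℤ) - 1))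
    (hδ : 2 ≤ δ)
    (a b m v fl : ℤ)
    (ha : a = (r : ℤ) * ⌈(k : ℚ) / (r : ℚ)⌉ - (k : ℤ))
    (hb : b = ((r : ℤ) + (δ : ℤ) - 1) * ⌈(n : ℚ) / ((r : ℚ) + (δ : ℚ) - 1)⌉ - (n : ℤ))
    (hm : m = ⌈(n : ℚ) / ((r : ℚ) + (δ : ℚ) - 1)⌉ - 1)
    (hfl : fl = ⌊(((r : ℤ) + (δ : ℤ) - 1 - b : ℤ) : ℚ) / (m : ℚ)⌋)
    (hv : v = (r : ℤ) + (δ : ℤ) - 1 - b - fl * m)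
    (hba : a < b)
    (hcase : (δ : ℤ) - 1 ≤ (⌈(k : ℚ) / (r : ℚ)⌉ - 1) * fl + min v (⌈(k : ℚ) / (r : ℚ)⌉ - 1)) :
    ∃ (F : Type) (_ : Field F) (_ : Fintype F) (_ : DecidableEq F)
      (C : Submodule F (Fin n → F)) (d : ℕ),
      Module.finrank F C = k ∧ HasAllSymbolLocality C r δ ∧ IsMinDist C d ∧
      (n : ℤ) - (k : ℤ) + 1 - ⌈(k : ℚ) / (r : ℚ)⌉ * ((δ : ℤ) - 1) ≤ (d : ℤ) := by
  -- With `K = ⌈k/r⌉` as a natural number, `k ≤ K * r` and `k + K * (δ - 1) ≤ n`.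
  obtain ⟨K, hKeq⟩ : ∃ K : ℕ, ⌈(k : ℚ) / (r : ℚ)⌉ = (K : ℤ) :=
    Int.eq_ofNat_of_zero_le (Int.ceil_nonneg (by positivity))
  have hK : k ≤ K * r := by
    have h1 := Int.le_ceil ((k : ℚ) / (r : ℚ))
    rw [hKeq, div_le_iff₀ (by exact_mod_cast hr)] at h1
    exact_mod_cast h1
  rw [hKeq] at hkn ⊢
  clear hcase hv hfl hm hb ha hba
  obtain ⟨D, rfl⟩ : ∃ D, δ = D + 1 := ⟨δ - 1, by omega⟩
  have hD : ((D + 1 : ℕ) : ℤ) - 1 = (D : ℤ) := by push_cast; ring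
  rw [hD] at hkn ⊢
  have h4 : k + K * D ≤ n := by
    zify
    linarith
  have hK2 : 2 ≤ K := by
    by_contra h
    have : K * r ≤ 1 * r := Nat.mul_le_mul_right _ (by omega)
    omega
  have hDn : D + 1 ≤ n := by
    have : 2 * D ≤ K * D := Nat.mul_le_mul_right _ hK2
    omega
  -- The last group has index `(n - δ) / q`, so its length `s + δ` satisfies `δ ≤ s + δ < q + δ`.
  have hq : 0 < r + D := by omega
  have hmod := Nat.mod_lt (n - (D + 1)) hq
  have hdiv := Nat.div_add_mod (n - (D + 1)) (r + D)
  generalize (n - (D + 1)) % (r + D) = s at hmod hdiv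
  generalize (n - (D + 1)) / (r + D) = M at hdiv
  have hn : n = (r + D) * M + (s + (D + 1)) := by omega
  have hσ := card_filter_min_div n (r + D) M (s + (D + 1)) hq hn
  obtain ⟨p, hpn, hp⟩ := Nat.exists_infinite_primes (2 ^ n + 1)
  have : Fact p.Prime := ⟨hp⟩
  obtain ⟨C, hCk, hCl, hCd⟩ := exists_code_of_groups
    (fun i : Fin n => min (i.val / (r + D)) M)
    (fun j => if j = M then min r (s + (D + 1) + 1 - (D + 1)) else r) r (D + 1) k (K * D) hδ
    (fun j => by
      split_ifs <;> omega)
    (fun i => by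
      rw [hσ]
      split_ifs <;> omega)
    (capacity_or_excess r (D + 1) k K M (s + (D + 1)) hδ hK (by omega) (by omega) _
      (fun j hj => by
        rw [hσ]
        split_ifs <;> omega)
      (by rw [hσ]; simp))
    (by simpa using h4) (F := ZMod p) (by rw [ZMod.card, Fintype.card_fin]; omega)
  rw [Fintype.card_fin] at hCd
  -- The minimum distance is attained, since `C` has positive dimension.
  have hex : ∃ d, ∃ x ∈ C, ∃ y ∈ C, x ≠ y ∧ hammingDist x y = d := by
    have hne : C ≠ ⊥ := by
      rintro rfl
      rw [finrank_bot] at hCk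
      omega
    obtain ⟨x, hx, hx0⟩ := C.exists_mem_ne_zero_of_ne_bot hne
    exact ⟨_, x, hx, 0, C.zero_mem, hx0, rfl⟩
  classical
  refine ⟨ZMod p, inferInstance, inferInstance, inferInstance, C, Nat.find hex, hCk, hCl,
    ⟨Nat.find_spec hex, fun x hx y hy hxy => Nat.find_min' hex ⟨x, hx, y, hy, hxy, rfl⟩⟩, ?_⟩
  obtain ⟨x, hx, y, hy, hxy, hd⟩ := Nat.find_spec hex
  have := hCd x hx y hy hxy
  rw [hd] at this
  generalize Nat.find hex = d at this
  zify at this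
  linarith
end

section
/- Let n, k, r, δ be integers with 0 < r < k ≤ n − ⌈k/r⌉(δ − 1) and δ ≥ 2. Set a = r⌈k/r⌉ − k, b = (r+δ−1)⌈n/(r+δ−1)⌉ − n, m = ⌈n/(r+δ−1)⌉ − 1, and v = r + δ − 1 − b − ⌊(r+δ−1−b)/m⌋·m. Assume b > a and δ − 1 > (⌈k/r⌉ − 1)⌊(r+δ−1−b)/m⌋ + min{v, ⌈k/r⌉ − 1}. Then there exists a finite field F and a linear code C over F of length n, dimension k, with all-symbol locality (r,δ), whose minimum distance is at least n − k + 1 − min{v, ⌈k/r⌉ − 1} − (⌈k/r⌉ − 1)(⌊(r+δ−1−b)/m⌋ + δ − 1). -/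
/-!
Write `q = n / m`, so that `q = r + δ - 1 + ⌊(r + δ - 1 - b) / m⌋` and `v = n % m`. The `n`
coordinates are partitioned into `m` blocks, `v` of size `q + 1` and the others of size `q`. In the
direct sum of `m` Reed–Solomon codes of dimension `r`, one per block (`blockEval`), any
`r + δ - 1` coordinates of a block form a locality set of every subcode, because a nonzero
polynomial of degree less than `r` has fewer than `r` roots (`isLocalitySet_of_block`).

The code is a `k`-dimensional subcode in general position. A set `T` of at least `k` coordinates
with at most `r` in each block imposes independent conditions on the messages
(`finrank_vanishing`), hence the messages vanishing on `T` form a subspace of codimension at least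
`k`; over a large enough field a `k`-dimensional space of messages meets all these subspaces
trivially (`exists_submodule_disjoint`). The zero set of a nonzero codeword therefore contains no
such `T`, and counting block by block (`sum_lt_of_sum_min_lt`) bounds its size: at most
`⌈k/r⌉ - 1` blocks contain more than `r` zeros, each with an excess of at most `q - r`, or
`q + 1 - r` for the `v` larger blocks.

The hypothesis `a < b` enters through `⌈k/r⌉ ≤ m`, which makes the direct sum large enough to
contain a `k`-dimensional subcode.
-/

open scoped BigOperators

/-! ### Subspaces in general position over a large finite field -/

/-- Fewer than `|F|` proper subspaces do not cover a vector space over `F`, because a proper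
subspace has index at least `|F|`. -/
lemma exists_notMem_of_card_lt {F V I : Type} [Field F] [Fintype F] [AddCommGroup V] [Module F V]
    [Module.Finite F V] (s : Finset I) (W : I → Submodule F V) (hs : s.card < Fintype.card F)
    (hW : ∀ i ∈ s, W i ≠ ⊤) : ∃ x, ∀ i ∈ s, x ∉ W i := by
  by_contra! h
  obtain ⟨i, hi, -, hle⟩ := AddSubgroup.exists_index_le_card_of_leftCoset_cover
    (s := s) (g := fun _ => (0 : V)) (H := fun i => (W i).toAddSubgroup) (by
      refine Set.eq_univ_of_forall fun x => ?_
      obtain ⟨i, hi, hx⟩ := h x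
      simp only [Set.mem_iUnion]
      exact ⟨i, hi, x, hx, zero_add x⟩)
  have : Finite V := Module.finite_of_finite F
  have : Nontrivial (V ⧸ W i) := Submodule.Quotient.nontrivial_iff.mpr (hW i hi)
  obtain ⟨x, hx⟩ := exists_ne (0 : V ⧸ W i)
  have : Finite (V ⧸ W i) := Finite.of_surjective _ (Submodule.mkQ_surjective (W i))
  have hinj : Nat.card F ≤ Nat.card (V ⧸ W i) :=
    Nat.card_le_card_of_injective (fun c : F => c • x) (smul_left_injective F hx)
  rw [Nat.card_eq_fintype_card] at hinj
  have hidx : (W i).toAddSubgroup.index = Nat.card (V ⧸ W i) := rfl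
  omega

/-- Over a large enough finite field, some `k`-dimensional subspace meets trivially each of
finitely many subspaces of codimension at least `k`. It is built one dimension at a time, each new
vector avoiding the sums of the subspace built so far with the given ones. -/
lemma exists_submodule_disjoint {F V I : Type} [Field F] [Fintype F] [AddCommGroup V] [Module F V]
    [Module.Finite F V] (s : Finset I) (W : I → Submodule F V) (hs : s.card < Fintype.card F)
    (k : ℕ) (hne : s.Nonempty) (hW : ∀ i ∈ s, Module.finrank F (W i) + k ≤ Module.finrank F V) :
    ∃ C : Submodule F V, Module.finrank F C = k ∧ ∀ i ∈ s, Disjoint C (W i) := by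
  induction k with
  | zero => exact ⟨⊥, by simp, by simp⟩
  | succ k ih =>
    obtain ⟨C, hC, hd⟩ := ih fun i hi => by have := hW i hi; omega
    obtain ⟨x, hx⟩ := exists_notMem_of_card_lt s (fun i => C ⊔ W i) hs fun i hi htop => by
      have h1 := Submodule.finrank_add_le_finrank_add_finrank C (W i)
      have h2 := hW i hi
      rw [htop, finrank_top] at h1
      omega
    have hxC : x ∉ C := by
      obtain ⟨i, hi⟩ := hne
      exact fun h => hx i hi (Submodule.mem_sup_left h)
    refine ⟨C ⊔ F ∙ x, ?_, fun i hi => ?_⟩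
    · have hx0 : x ≠ 0 := fun h => hxC (h ▸ C.zero_mem)
      have hdisj : Disjoint C (F ∙ x) := by
        rw [Submodule.disjoint_span_singleton' hx0]
        exact hxC
      have := Submodule.finrank_sup_add_finrank_inf_eq C (F ∙ x)
      rw [hdisj.eq_bot, finrank_bot, finrank_span_singleton hx0] at this
      omega
    · rw [Submodule.disjoint_def]
      intro y hy hyW
      obtain ⟨c, hc, z, hz, rfl⟩ := Submodule.mem_sup.mp hy
      obtain ⟨t, rfl⟩ := Submodule.mem_span_singleton.mp hz
      have ht : t = 0 := by
        by_contra ht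
        refine hx i hi ?_
        have : t • x ∈ C ⊔ W i := by
          have h := Submodule.add_mem _ (Submodule.mem_sup_left (C.neg_mem hc))
            (Submodule.mem_sup_right hyW : c + t • x ∈ C ⊔ W i)
          simpa using h
        exact (Submodule.smul_mem_iff _ ht).mp this
      subst ht
      rw [zero_smul, add_zero] at hyW ⊢
      exact (Submodule.disjoint_def.mp (hd i hi)) c hc hyW

/-! ### Blockwise Reed–Solomon evaluation -/

/-- Blockwise Reed–Solomon encoding: the coordinates are partitioned into blocks by `g`, a message
is one polynomial of degree less than `r` per block, and coordinate `i` of its image is the value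
at `α i` of the polynomial belonging to the block of `i`. -/
noncomputable def blockEval {F : Type} [Field F] {n m : ℕ} (g : Fin n → Fin m) (α : Fin n → F)
    (r : ℕ) : (Fin m → Polynomial.degreeLT F r) →ₗ[F] (Fin n → F) :=
  LinearMap.pi fun i => Polynomial.leval (α i) ∘ₗ (Polynomial.degreeLT F r).subtype ∘ₗ
    LinearMap.proj (g i)

lemma blockEval_apply {F : Type} [Field F] {n m : ℕ} (g : Fin n → Fin m) (α : Fin n → F)
    (r : ℕ) (f : Fin m → Polynomial.degreeLT F r) (i : Fin n) :
    blockEval g α r f i = (f (g i) : Polynomial F).eval (α i) := rfl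

/-- The messages whose encoding vanishes on `T`. -/
noncomputable def vanishing {F : Type} [Field F] {n m : ℕ} (g : Fin n → Fin m) (α : Fin n → F)
    (r : ℕ) (T : Finset (Fin n)) : Submodule F (Fin m → Polynomial.degreeLT F r) :=
  LinearMap.ker (LinearMap.funLeft F F (Subtype.val : T → Fin n) ∘ₗ blockEval g α r)

lemma mem_vanishing {F : Type} [Field F] {n m : ℕ} (g : Fin n → Fin m) (α : Fin n → F)
    (r : ℕ) (T : Finset (Fin n)) (f : Fin m → Polynomial.degreeLT F r) :
    f ∈ vanishing g α r T ↔ ∀ i ∈ T, blockEval g α r f i = 0 := by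
  simp [vanishing, funext_iff, LinearMap.funLeft_apply]

lemma finrank_messages {F : Type} [Field F] (m r : ℕ) :
    Module.finrank F (Fin m → Polynomial.degreeLT F r) = m * r := by
  rw [Module.finrank_pi_fintype]
  simp [(Polynomial.degreeLTEquiv F r).finrank_eq]

/-- If `T` meets every block in at most `r` places, the vanishing conditions on `T` are linearly
independent: by Lagrange interpolation, the values on `T` can be prescribed arbitrarily. -/
lemma finrank_vanishing {F : Type} [Field F] {n m : ℕ} (g : Fin n → Fin m) (α : Fin n → F)
    (hα : Function.Injective α) (r : ℕ) (T : Finset (Fin n))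
    (hT : ∀ j, (T.filter fun i => g i = j).card ≤ r) :
    Module.finrank F (vanishing g α r T) + T.card = m * r := by
  classical
  have hsurj : Function.Surjective
      (LinearMap.funLeft F F (Subtype.val : T → Fin n) ∘ₗ blockEval g α r) := by
    intro y
    let y' : Fin n → F := fun i => if h : i ∈ T then y ⟨i, h⟩ else 0
    refine ⟨fun j => ⟨Lagrange.interpolate (T.filter fun i => g i = j) α y', ?_⟩, ?_⟩
    · rw [Polynomial.mem_degreeLT]
      exact (Lagrange.degree_interpolate_lt _ hα.injOn).trans_le (by exact_mod_cast hT j)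
    · ext ⟨i, hi⟩
      simp only [LinearMap.comp_apply, LinearMap.funLeft_apply, blockEval_apply]
      rw [Lagrange.eval_interpolate_at_node _ hα.injOn (by simp [hi])]
      simp [y', hi]
  have h := LinearMap.finrank_range_add_finrank_ker
    (LinearMap.funLeft F F (Subtype.val : T → Fin n) ∘ₗ blockEval g α r)
  rw [LinearMap.range_eq_top.mpr hsurj, finrank_top, finrank_messages,
    Module.finrank_fintype_fun_eq_card, Fintype.card_coe] at h
  rw [vanishing]
  omega

/-! ### Counting coordinates block by block -/

lemma card_block (n m : ℕ) (hm : 0 < m) (j : Fin m) :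
    ((Finset.univ : Finset (Fin n)).filter
      fun i => (⟨i.1 % m, Nat.mod_lt _ hm⟩ : Fin m) = j).card
      = n / m + if j.1 < n % m then 1 else 0 := by
  have h := Nat.count_modEq_card n hm j.1
  rw [Nat.mod_eq_of_lt j.2] at h
  rw [← h, Nat.count_eq_card_filter_range]
  refine Finset.card_bij (fun i _ => i.1) (fun i hi => ?_) (fun i _ i' _ h => Fin.ext h)
    fun x hx => ?_
  · simp only [Finset.mem_filter, Finset.mem_univ, true_and, Fin.ext_iff] at hi
    simp [Nat.ModEq, hi, Nat.mod_eq_of_lt j.2]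
  · simp only [Finset.mem_filter, Finset.mem_range, Nat.ModEq, Nat.mod_eq_of_lt j.2] at hx
    exact ⟨⟨x, hx.1⟩, by simp [Fin.ext_iff, hx.2], rfl⟩

/-- Discarding the coordinates of `Z` beyond the first `r` in each block. -/
lemma exists_truncation {n m : ℕ} (g : Fin n → Fin m) (r : ℕ) (Z : Finset (Fin n)) :
    ∃ T ⊆ Z, (∀ j, (T.filter fun i => g i = j).card ≤ r) ∧
      T.card = ∑ j, min (Z.filter fun i => g i = j).card r := by
  classical
  choose t hts htc using fun j => Finset.exists_subset_card_eq
    (min_le_left (Z.filter fun i => g i = j).card r)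
  have hg : ∀ j, ∀ i ∈ t j, i ∈ Z ∧ g i = j := fun j i hi => by simpa using hts j hi
  have hfib : ∀ j, ((Finset.univ.biUnion t).filter fun i => g i = j) = t j := by
    intro j
    ext i
    simp only [Finset.mem_filter, Finset.mem_biUnion, Finset.mem_univ, true_and]
    constructor
    · rintro ⟨⟨j', h⟩, rfl⟩
      obtain rfl := (hg j' i h).2
      exact h
    · exact fun h => ⟨⟨j, h⟩, (hg j i h).2⟩
  refine ⟨Finset.univ.biUnion t, ?_, fun j => ?_, ?_⟩
  · simp only [Finset.biUnion_subset]
    exact fun j _ i hi => (hg j i hi).1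
  · rw [hfib, htc]
    exact min_le_right _ _
  · rw [Finset.card_eq_sum_card_fiberwise (f := g) (t := Finset.univ) (by simp)]
    exact Finset.sum_congr rfl fun j _ => by rw [hfib, htc]

/-- If the truncated block counts `min (z j) r` sum to less than `k ≤ K r`, at most `K - 1` blocks
exceed `r`, and each of them contributes an excess of at most `q - r`, plus one if it is among
the `v` larger blocks. -/
lemma sum_lt_of_sum_min_lt {m : ℕ} (z : Fin m → ℕ) (k r K q v : ℕ)
    (hK : k ≤ K * r) (hq : r ≤ q)
    (hz : ∀ j, z j ≤ q + if j.1 < v then 1 else 0) (hsum : ∑ j, min (z j) r < k) :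
    ∑ j, z j < k + (K - 1) * (q - r) + min v (K - 1) := by
  classical
  set B := Finset.univ.filter fun j => r < z j with hB
  have hBK : B.card ≤ K - 1 := by
    have h1 : B.card * r ≤ ∑ j, min (z j) r := by
      calc B.card * r = ∑ j ∈ B, r := by simp
        _ ≤ ∑ j ∈ B, min (z j) r := Finset.sum_le_sum fun j hj => by
            have : r < z j := by simpa [hB] using hj
            omega
        _ ≤ _ := Finset.sum_le_sum_of_subset (Finset.subset_univ _)
    have h2 : B.card * r < K * r := by omega
    have := Nat.lt_of_mul_lt_mul_right h2
    omega
  have hexc : ∑ j, (z j - r) ≤ ∑ j ∈ B, ((q - r) + if j.1 < v then 1 else 0) := by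
    rw [hB, Finset.sum_filter]
    refine Finset.sum_le_sum fun j _ => ?_
    have := hz j
    split_ifs at * <;> omega
  have hv : ∑ j ∈ B, (if j.1 < v then 1 else 0) ≤ min v B.card := by
    rw [← Finset.card_filter]
    refine le_min ?_ (Finset.card_filter_le _ _)
    have := Finset.card_le_card_of_injOn (s := B.filter fun j => j.1 < v) (t := Finset.range v)
      (fun j => j.1) (fun j hj => by simp at hj ⊢; exact hj.2) Fin.val_injective.injOn
    simpa using this
  have hsplit : ∑ j, z j = ∑ j, min (z j) r + ∑ j, (z j - r) := by
    rw [← Finset.sum_add_distrib]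
    exact Finset.sum_congr rfl fun j _ => by omega
  rw [Finset.sum_add_distrib, Finset.sum_const, smul_eq_mul] at hexc
  have hmul : B.card * (q - r) ≤ (K - 1) * (q - r) := Nat.mul_le_mul_right _ hBK
  omega

/-! ### The code -/

/-- Every set of `r + δ - 1` coordinates inside one block is a locality set of the blockwise
Reed–Solomon code, as a nonzero polynomial of degree less than `r` has fewer than `r` roots. -/
lemma isLocalitySet_of_block {F : Type} [Field F] [DecidableEq F] {n m : ℕ} (g : Fin n → Fin m)
    (α : Fin n → F) (hα : Function.Injective α) (r δ : ℕ)
    (C : Submodule F (Fin n → F)) (hC : C ≤ LinearMap.range (blockEval g α r))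
    (S : Finset (Fin n)) (j : Fin m) (hS : ∀ i ∈ S, g i = j) (hcard : S.card = r + δ - 1) :
    IsLocalitySet C r δ S := by
  refine ⟨hcard.le, fun x hx y hy ⟨i, hi, hne⟩ => ?_⟩
  obtain ⟨f, hf⟩ := hC (C.sub_mem hx hy)
  have hval : ∀ i ∈ S, x i - y i = (f j : Polynomial F).eval (α i) := fun i hi => by
    rw [← Pi.sub_apply, ← hf, blockEval_apply, hS i hi]
  have hlt : (S.filter fun i => ¬ x i ≠ y i).card < r := by
    by_contra! hle
    have h0 := Polynomial.eq_zero_of_degree_lt_of_eval_index_eq_zero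
      (f := (f j : Polynomial F)) _ hα.injOn
      ((Polynomial.mem_degreeLT.mp (f j).2).trans_le (Nat.cast_le.mpr hle))
      (fun i hi => by
        rw [Finset.mem_filter] at hi
        rw [← hval i hi.1, hi.2, sub_self])
    exact hne (sub_eq_zero.mp (by rw [hval i hi, h0, Polynomial.eval_zero]))
  have := Finset.card_filter_add_card_filter_not (s := S) (fun i => x i ≠ y i)
  rw [projDist]
  omega

lemma exists_isMinDist {F : Type} [Field F] [DecidableEq F] {n : ℕ} (C : Submodule F (Fin n → F))
    (hC : C ≠ ⊥) : ∃ d, IsMinDist C d := by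
  classical
  have hex : ∃ d, ∃ x ∈ C, ∃ y ∈ C, x ≠ y ∧ hammingDist x y = d := by
    obtain ⟨x, hx, h0⟩ := C.ne_bot_iff.mp hC
    exact ⟨_, x, hx, 0, C.zero_mem, h0, rfl⟩
  exact ⟨Nat.find hex, Nat.find_spec hex, fun x hx y hy h =>
    Nat.find_min' hex ⟨x, hx, y, hy, h, rfl⟩⟩

/-- The construction in terms of natural numbers: `n` coordinates in `m` blocks of sizes `n / m`
and `n / m + 1`, with `K` standing for `⌈k/r⌉`. -/
lemma exists_code (n k r δ m K : ℕ) (hr : 0 < r) (hk : 0 < k) (hδ : 0 < δ) (hm : 0 < m)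
    (hK : k ≤ K * r) (hkm : k ≤ m * r) (hq : r + δ - 1 ≤ n / m) :
    ∃ (F : Type) (_ : Field F) (_ : Fintype F) (_ : DecidableEq F)
      (C : Submodule F (Fin n → F)) (d : ℕ),
      Module.finrank F C = k ∧ HasAllSymbolLocality C r δ ∧ IsMinDist C d ∧
      n + 1 ≤ d + k + (K - 1) * (n / m - r) + min (n % m) (K - 1) := by
  classical
  -- More than `2 ^ n` field elements: an evaluation point per coordinate, and more scalars than
  -- there are sets of coordinates.
  obtain ⟨p, hpn, hp⟩ := Nat.exists_infinite_primes (2 ^ n + 1)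
  have : Fact p.Prime := ⟨hp⟩
  let F := ZMod p
  have hcardF : Fintype.card F = p := ZMod.card p
  have hn2 : n < 2 ^ n := Nat.lt_two_pow_self
  obtain ⟨α⟩ : Nonempty (Fin n ↪ F) :=
    Function.Embedding.nonempty_of_card_le (by rw [hcardF, Fintype.card_fin]; omega)
  have hα := α.injective
  let g : Fin n → Fin m := fun i => ⟨i.1 % m, Nat.mod_lt _ hm⟩
  have hblock : ∀ j, ((Finset.univ : Finset (Fin n)).filter fun i => g i = j).card
      = n / m + if j.1 < n % m then 1 else 0 := card_block n m hm
  let 𝒯 : Finset (Finset (Fin n)) := Finset.univ.filter fun T =>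
    k ≤ T.card ∧ ∀ j, (T.filter fun i => g i = j).card ≤ r
  have h𝒯card : 𝒯.card < Fintype.card F := by
    have : 𝒯.card ≤ 2 ^ n := (Finset.card_filter_le _ _).trans (by simp)
    omega
  have hmem : ∀ Z : Finset (Fin n), k ≤ ∑ j, min (Z.filter fun i => g i = j).card r →
      ∃ T ∈ 𝒯, T ⊆ Z := by
    intro Z hZ
    obtain ⟨T, hTZ, hT, hc⟩ := exists_truncation g r Z
    exact ⟨T, by simp only [𝒯, Finset.mem_filter, Finset.mem_univ, true_and]; exact ⟨by omega, hT⟩,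
      hTZ⟩
  have hne : 𝒯.Nonempty := by
    obtain ⟨T, hT, -⟩ := hmem Finset.univ (by
      have : ∀ j, min (((Finset.univ : Finset (Fin n)).filter fun i => g i = j).card) r = r := by
        intro j
        rw [hblock]
        omega
      simp only [this]
      simpa using hkm)
    exact ⟨T, hT⟩
  obtain ⟨M, hM, hdisj⟩ := exists_submodule_disjoint 𝒯 (vanishing g α r) h𝒯card k hne (by
    intro T hT
    simp only [𝒯, Finset.mem_filter, Finset.mem_univ, true_and] at hT
    have := finrank_vanishing g α hα r T hT.2
    rw [finrank_messages]
    omega)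
  have hzero : ∀ f ∈ M, ∀ T ∈ 𝒯, (∀ i ∈ T, blockEval g α r f i = 0) → f = 0 := fun f hf T hT h =>
    Submodule.disjoint_def.mp (hdisj T hT) f hf ((mem_vanishing g α r T f).mpr h)
  have hinj : Function.Injective ((blockEval g α r).domRestrict M) := by
    rw [injective_iff_map_eq_zero]
    intro f hf
    obtain ⟨T, hT⟩ := hne
    exact Subtype.ext (hzero f f.2 T hT fun i _ => congrFun hf i)
  have hrank : Module.finrank F (M.map (blockEval g α r)) = k := by
    rw [← LinearMap.range_domRestrict, LinearMap.finrank_range_of_inj hinj, hM]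
  obtain ⟨d, hd⟩ := exists_isMinDist (M.map (blockEval g α r)) (fun h => by
    rw [h, finrank_bot] at hrank
    omega)
  refine ⟨F, inferInstance, inferInstance, inferInstance, M.map (blockEval g α r), d, hrank, ?_,
    hd, ?_⟩
  · intro i
    obtain ⟨S, hiS, hSu, hS⟩ := Finset.exists_subsuperset_card_eq (n := r + δ - 1)
      (s := {i}) (t := Finset.univ.filter fun i' => g i' = g i) (by simp)
      (by rw [Finset.card_singleton]; omega) (by rw [hblock]; omega)
    refine ⟨S, hiS (by simp), isLocalitySet_of_block g α hα r δ _ LinearMap.map_le_range S (g i)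
      (fun i' hi' => by simpa using hSu hi') hS⟩
  · obtain ⟨⟨x, hx, y, hy, hxy, rfl⟩, -⟩ := hd
    obtain ⟨f, hf, hfxy⟩ := Submodule.sub_mem _ hx hy
    set Z : Finset (Fin n) := Finset.univ.filter fun i => ¬ x i ≠ y i with hZ
    have hZcard : hammingDist x y + Z.card = n := by
      have := Finset.card_filter_add_card_filter_not (s := (Finset.univ : Finset (Fin n)))
        (fun i => x i ≠ y i)
      simpa [hammingDist, hZ] using this
    have hlt : ∑ j, min (Z.filter fun i => g i = j).card r < k := by
      by_contra! hle
      obtain ⟨T, hT, hTZ⟩ := hmem Z hle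
      have hf0 : f = 0 := hzero f hf T hT fun i hi => by
        have : x i = y i := by simpa [hZ] using hTZ hi
        rw [hfxy, Pi.sub_apply, this, sub_self]
      rw [hf0, map_zero] at hfxy
      exact hxy (sub_eq_zero.mp hfxy.symm)
    have hbound := sum_lt_of_sum_min_lt (fun j => (Z.filter fun i => g i = j).card) k r K (n / m)
      (n % m) hK (by omega) (fun j => by
        rw [← hblock j]
        exact Finset.card_le_card (Finset.filter_subset_filter _ (Finset.subset_univ _))) hlt
    rw [← Finset.card_eq_sum_card_fiberwise (f := g) (t := Finset.univ) (by simp)] at hbound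
    omega



/-- Lower bound for the maximal minimum distance of linear `(n,k,r,δ)`-LRCs, second case:
if `δ - 1 > (⌈k/r⌉ - 1)⌊(r+δ-1-b)/m⌋ + min{v, ⌈k/r⌉ - 1}`, then there is a linear
`(n,k,r,δ)`-LRC with minimum distance at least
`n - k + 1 - min{v, ⌈k/r⌉ - 1} - (⌈k/r⌉ - 1)(⌊(r+δ-1-b)/m⌋ + δ - 1)`. -/
theorem dmax_lower_bound_case2
    (n k r δ : ℕ) (hr : 0 < r) (hrk : r < k)
    (hkn : (k : ℤ) ≤ (n : ℤ) - ⌈(k : ℚ) / (r : ℚ)⌉ * ((δ : ℤ) - 1))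
    (hδ : 2 ≤ δ)
    (a b m v fl : ℤ)
    (ha : a = (r : ℤ) * ⌈(k : ℚ) / (r : ℚ)⌉ - (k : ℤ))
    (hb : b = ((r : ℤ) + (δ : ℤ) - 1) * ⌈(n : ℚ) / ((r : ℚ) + (δ : ℚ) - 1)⌉ - (n : ℤ))
    (hm : m = ⌈(n : ℚ) / ((r : ℚ) + (δ : ℚ) - 1)⌉ - 1)
    (hfl : fl = ⌊(((r : ℤ) + (δ : ℤ) - 1 - b : ℤ) : ℚ) / (m : ℚ)⌋)
    (hv : v = (r : ℤ) + (δ : ℤ) - 1 - b - fl * m)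
    (hba : a < b)
    (hcase : (⌈(k : ℚ) / (r : ℚ)⌉ - 1) * fl + min v (⌈(k : ℚ) / (r : ℚ)⌉ - 1) < (δ : ℤ) - 1) :
    ∃ (F : Type) (_ : Field F) (_ : Fintype F) (_ : DecidableEq F)
      (C : Submodule F (Fin n → F)) (d : ℕ),
      Module.finrank F C = k ∧ HasAllSymbolLocality C r δ ∧ IsMinDist C d ∧
      (n : ℤ) - (k : ℤ) + 1 - min v (⌈(k : ℚ) / (r : ℚ)⌉ - 1)
        - (⌈(k : ℚ) / (r : ℚ)⌉ - 1) * (fl + (δ : ℤ) - 1) ≤ (d : ℤ) := by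
  clear hcase
  have hrQ : (0 : ℚ) < r := by exact_mod_cast hr
  have hK1 := Int.le_ceil ((k : ℚ) / (r : ℚ))
  have hK2 := Int.ceil_lt_add_one ((k : ℚ) / (r : ℚ))
  generalize ⌈(k : ℚ) / (r : ℚ)⌉ = Kz at *
  have hsQ : (0 : ℚ) < (r : ℚ) + δ - 1 := by
    have : (2 : ℚ) ≤ δ := by exact_mod_cast hδ
    linarith
  have hN1 := Int.le_ceil ((n : ℚ) / ((r : ℚ) + (δ : ℚ) - 1))
  have hN2 := Int.ceil_lt_add_one ((n : ℚ) / ((r : ℚ) + (δ : ℚ) - 1))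
  generalize ⌈(n : ℚ) / ((r : ℚ) + (δ : ℚ) - 1)⌉ = N at *
  rw [div_le_iff₀ hrQ] at hK1
  rw [← sub_lt_iff_lt_add, lt_div_iff₀ hrQ] at hK2
  rw [div_le_iff₀ hsQ] at hN1
  rw [← sub_lt_iff_lt_add, lt_div_iff₀ hsQ] at hN2
  have hK1' : (k : ℤ) ≤ Kz * r := by exact_mod_cast hK1
  have hK2' : (Kz - 1) * r < (k : ℤ) := by exact_mod_cast hK2
  have hN2' : (N - 1) * ((r : ℤ) + δ - 1) < n := by exact_mod_cast hN2
  have hs : (0 : ℤ) < (r : ℤ) + δ - 1 := by omega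
  -- `b > a` yields `⌈k/r⌉ (r + δ - 1) < N (r + δ - 1)`, so the `m = N - 1` blocks suffice.
  have hKN : Kz < N := by
    have : Kz * ((r : ℤ) + δ - 1) < N * ((r : ℤ) + δ - 1) := by nlinarith
    exact lt_of_mul_lt_mul_right this hs.le
  have hKpos : 1 < Kz := by
    by_contra! h
    have : Kz * r ≤ 1 * r := by gcongr
    omega
  obtain ⟨K, rfl⟩ : ∃ K : ℕ, Kz = K := ⟨Kz.toNat, by omega⟩
  obtain ⟨m', rfl⟩ : ∃ m' : ℕ, m = m' := ⟨m.toNat, by omega⟩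
  have hmpos : 0 < m' := by omega
  have hKm : K ≤ m' := by omega
  have hrem : (r : ℤ) + δ - 1 - b = n - m' * ((r : ℤ) + δ - 1) := by rw [hb, hm]; ring
  have hflr : fl = (n : ℤ) / m' - ((r : ℤ) + δ - 1) := by
    rw [hfl, Int.cast_natCast, Rat.floor_intCast_div_natCast, hrem, sub_eq_add_neg, ← mul_neg,
      Int.add_mul_ediv_left _ _ (by omega)]
    ring
  have hvr : v = (n : ℤ) % m' := by
    rw [hv, hflr, hrem, Int.emod_def]
    ring
  have hfl0 : 0 ≤ fl := by
    rw [hfl]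
    apply Int.floor_nonneg.mpr
    apply div_nonneg
    · have : 0 ≤ (r : ℤ) + δ - 1 - b := by rw [hrem, hm]; nlinarith
      exact_mod_cast this
    · positivity
  have hq : r + δ - 1 ≤ n / m' := by
    have : ((n / m' : ℕ) : ℤ) = (n : ℤ) / m' := by push_cast; rfl
    omega
  obtain ⟨F, i1, i2, i3, C, d, hC, hloc, hd, hbd⟩ := exists_code n k r δ m' K hr (by omega)
    (by omega) hmpos (by exact_mod_cast hK1')
    (le_trans (by exact_mod_cast hK1') (Nat.mul_le_mul_right r hKm)) hq
  refine ⟨F, i1, i2, i3, C, d, hC, hloc, hd, ?_⟩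
  have hbd' : (n : ℤ) + 1 ≤ d + k + (K - 1) * ((n : ℤ) / m' - r)
      + min ((n : ℤ) % m') ((K : ℤ) - 1) := by
    have h1 : 1 ≤ K := by omega
    have h2 : r ≤ n / m' := by omega
    zify [h1, h2] at hbd
    exact hbd
  have hsub : fl + (δ : ℤ) - 1 = (n : ℤ) / m' - r := by rw [hflr]; ring
  rw [hsub, hvr]
  linarith
end

section
/- Let (E, F_1,…,F_m, k, ρ_1,…,ρ_m) be a Construction-1 configuration with parameters n = |E|, k, r = max_i ρ_i, δ = 1 + min_i η_i, and d = n − k + 1 − max{Σ_{i∈I} η_i : I ⊆ {1,…,m}, |F_I| − Σ_{i∈I} η_i < k}. Then there exists a finite field F and a linear code C over F of length n, dimension k, with all-symbol locality (r,δ), whose minimum distance equals d; moreover, for each i, every subset S ⊆ F_i with |S| = ρ_i + δ − 1 is an (r,δ)-locality set of C. -/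
/-! The code is the kernel of a generic parity-check matrix `H` with `n - k` rows: for every `i`
there are `η i` rows supported on `F i`, and the remaining `n - k - ∑ η i` rows are supported
everywhere.  Generic means that every square submatrix of `H` whose support pattern admits a
perfect matching is invertible.  Such a matrix exists over `ℤ`, because each relevant minor is a
nonzero polynomial in the free entries, and hence over `ZMod p` for a large prime `p`
(`exists_generic_matrix`).  Consequently a set of columns that can be matched injectively to rows
supports no nonzero codeword (`eq_zero_of_matching`), and everything becomes Hall's theorem:

* the rows can be matched to columns, since each `F j` contains at least `η j` elements lying in
  no other `F i`; therefore `dim C = k`;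
* any `η i` columns inside `F i` are matched to the `η i` rows supported on `F i`, so a codeword
  vanishing on `ρ i` positions of `F i` vanishes on `F i`, which is the locality;
* if `x ≠ 0` is a codeword, Hall's condition fails on some `Y ⊆ supp x`; with
  `I = {i | F i ∩ Y = ∅}` the rows meeting `Y` number `n - k - ∑_I η`, so
  `|Y| ≥ n - k + 1 - ∑_I η`, while `Y ⊆ E \ F_I` gives `|F_I| - ∑_I η < k`;
* conversely, given such an `I`, a set `Y ⊆ E \ F_I` with `n - k + 1 - ∑_I η` elements meets only
  `n - k - ∑_I η` rows, so it supports a nonzero codeword by counting dimensions. -/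

open scoped BigOperators

open scoped BigOperators

/-- A Construction-1 configuration: a finite set `E ⊆ ℕ` covered by nonempty subsets
`F 0, …, F (m-1)`, a positive integer `k`, and ranks `ρ i` with `0 < ρ i < |F i|`,
such that `k ≤ |E| - ∑ η i` (where `η i = |F i| - ρ i`) and
`|F_{[m] \ {j}} ∩ F j| < ρ j` for all `j`. -/
structure Constr1Config where
  /-- the number of subsets -/
  m : ℕ
  hm : 0 < m
  /-- the subsets `F i` -/
  F : Fin m → Finset ℕ
  /-- the dimension -/
  k : ℕ
  hk : 0 < k
  /-- the ranks of the subsets -/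
  ρ : Fin m → ℕ
  hρpos : ∀ i, 0 < ρ i
  hρlt : ∀ i, ρ i < (F i).card
  hdim : (k : ℤ) ≤ ((Finset.univ.biUnion F).card : ℤ) - ∑ i, (((F i).card : ℤ) - (ρ i : ℤ))
  hint : ∀ j, (((Finset.univ.erase j).biUnion F) ∩ F j).card < ρ j

namespace Constr1Config

variable (c : Constr1Config)

/-- The ground set `E = F_[m]`. -/
def E : Finset ℕ := Finset.univ.biUnion c.F

/-- The parameter `n = |E|`. -/
def n : ℕ := c.E.card

/-- The nullity `η i = |F i| - ρ i`. -/
def η (i : Fin c.m) : ℕ := (c.F i).card - c.ρ i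

/-- The parameter `r = max_i ρ i`. -/
def r : ℕ := Finset.univ.sup c.ρ

/-- The parameter `δ = 1 + min_i η i`. -/
def δ : ℕ :=
  1 + Finset.univ.inf' ⟨⟨0, c.hm⟩, Finset.mem_univ _⟩ c.η

/-- The minimum-distance parameter
`d = n - k + 1 - max{∑_{i ∈ I} η i : |F_I| - ∑_{i ∈ I} η i < k}`. -/
def d : ℤ :=
  (c.n : ℤ) - (c.k : ℤ) + 1 -
    (((Finset.univ.powerset.filter
        (fun I : Finset (Fin c.m) =>
          ((I.biUnion c.F).card : ℤ) - ∑ i ∈ I, (c.η i : ℤ) < (c.k : ℤ))).sup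
        (fun I => ∑ i ∈ I, c.η i) : ℕ) : ℤ)

end Constr1Config

/-- The generic matrix with a prescribed support, with one indeterminate per free entry. -/
noncomputable def genericMatrix {R E : Type} (supp : R → E → Prop) :
    Matrix R E (MvPolynomial (R × E) ℤ) :=
  open Classical in Matrix.of fun r e => if supp r e then MvPolynomial.X (r, e) else 0

lemma det_genericMatrix_ne_zero {R E : Type} [DecidableEq E] (supp : R → E → Prop)
    (T : Finset E) (f : T → R) (hf : Function.Injective f) (hs : ∀ t : T, supp (f t) t) :
    ((genericMatrix supp).submatrix f (Subtype.val : T → E)).det ≠ 0 := by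
  classical
  intro h
  -- Specialising the matched entries to `1` and all others to `0` yields the identity matrix.
  let v : R × E → ℤ := fun q => if ∃ t : T, f t = q.1 ∧ (t : E) = q.2 then 1 else 0
  have h1 := congrArg (MvPolynomial.eval v) h
  rw [RingHom.map_det, map_zero] at h1
  have h2 : (MvPolynomial.eval v).mapMatrix
      ((genericMatrix supp).submatrix f (Subtype.val : T → E)) = 1 := by
    ext t t'
    simp only [RingHom.mapMatrix_apply, Matrix.map_apply, Matrix.submatrix_apply, genericMatrix,
      Matrix.of_apply, Matrix.one_apply]
    by_cases htt : t = t'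
    · subst htt
      rw [if_pos (hs t), if_pos rfl, MvPolynomial.eval_X]
      exact if_pos ⟨t, rfl, rfl⟩
    · rw [if_neg htt]
      split_ifs
      · rw [MvPolynomial.eval_X]
        refine if_neg ?_
        rintro ⟨t'', h3, h4⟩
        exact htt ((hf h3).symm.trans (Subtype.ext h4))
      · simp
  rw [h2, Matrix.det_one] at h1
  exact one_ne_zero h1

/-- Over a suitable prime field there is a matrix with the prescribed support all of whose
square submatrices that admit a matching inside the support are invertible. -/
lemma exists_generic_matrix {R E : Type} [Fintype R] [Fintype E] [DecidableEq E]
    (supp : R → E → Prop) :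
    ∃ (p : ℕ) (_ : Fact p.Prime) (H : Matrix R E (ZMod p)),
      (∀ r e, ¬ supp r e → H r e = 0) ∧
      ∀ (T : Finset E) (f : T → R), Function.Injective f → (∀ t : T, supp (f t) t) →
        (H.submatrix f (Subtype.val : T → E)).det ≠ 0 := by
  classical
  let P : MvPolynomial (R × E) ℤ :=
    ∏ q : (Σ T : Finset E, (T → R)) with Function.Injective q.2 ∧ ∀ t : q.1, supp (q.2 t) t,
      ((genericMatrix supp).submatrix q.2 (Subtype.val : q.1 → E)).det
  have hP : P ≠ 0 := by
    refine Finset.prod_ne_zero_iff.2 fun q hq => ?_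
    simp only [Finset.mem_filter, Finset.mem_univ, true_and] at hq
    exact det_genericMatrix_ne_zero supp q.1 q.2 hq.1 hq.2
  obtain ⟨v, hv⟩ : ∃ v, MvPolynomial.eval v P ≠ 0 := by
    by_contra! h
    exact hP (MvPolynomial.funext fun v => by rw [h v, map_zero])
  obtain ⟨p, hpN, hp⟩ := Nat.exists_infinite_primes ((MvPolynomial.eval v P).natAbs + 1)
  let φ : MvPolynomial (R × E) ℤ →+* ZMod p :=
    (Int.castRingHom (ZMod p)).comp (MvPolynomial.eval v)
  have hφ : φ P ≠ 0 := by
    intro h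
    have h1 : ((MvPolynomial.eval v P : ℤ) : ZMod p) = 0 := h
    rw [ZMod.intCast_zmod_eq_zero_iff_dvd] at h1
    have := Nat.le_of_dvd (Int.natAbs_pos.2 hv) (Int.natCast_dvd.1 h1)
    omega
  refine ⟨p, ⟨hp⟩, (genericMatrix supp).map φ, fun r e hre => ?_, fun T f hf hs => ?_⟩
  · simp [genericMatrix, hre]
  · intro h
    have : Fact p.Prime := ⟨hp⟩
    refine hφ ?_
    rw [map_prod]
    refine Finset.prod_eq_zero (i := ⟨T, f⟩) 
      (Finset.mem_filter.2 ⟨Finset.mem_univ _, hf, hs⟩) ?_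
    rw [RingHom.map_det]
    exact h

/-- If the columns in `T` form an invertible submatrix with the rows `f t`, then a vector supported
on `T` and orthogonal to those rows is zero. -/
lemma eq_zero_of_matching {R E K : Type} [Fintype E] [DecidableEq E] [Field K]
    (H : Matrix R E K) (T : Finset E) (f : T → R)
    (hdet : (H.submatrix f (Subtype.val : T → E)).det ≠ 0) (x : E → K)
    (hx : ∀ e ∉ T, x e = 0) (hH : ∀ t, ∑ e, H (f t) e * x e = 0) : x = 0 := by
  have h := Matrix.eq_zero_of_mulVec_eq_zero hdet (v := fun t : T => x t) (by
    ext t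
    rw [Pi.zero_apply, ← hH t]
    simp only [Matrix.mulVec, dotProduct, Matrix.submatrix_apply]
    rw [Finset.sum_coe_sort T (fun e => H (f t) e * x e)]
    exact Finset.sum_subset (Finset.subset_univ _) fun e _ he => by rw [hx e he, mul_zero])
  ext e
  by_cases he : e ∈ T
  · exact congrFun h ⟨e, he⟩
  · exact hx e he

/-- Rows attached to the index set `I`, together with all rows of full support. -/
def rowsOf {ι : Type} (η : ι → ℕ) (s : ℕ) (I : Finset ι) : Finset ((Σ i, Fin (η i)) ⊕ Fin s) :=
  (I.sigma fun _ => Finset.univ).disjSum Finset.univ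

lemma card_rowsOf {ι : Type} (η : ι → ℕ) (s : ℕ) (I : Finset ι) :
    (rowsOf η s I).card = ∑ i ∈ I, η i + s := by
  simp [rowsOf, Finset.card_sigma]

section Construction

variable {ι E : Type} [Fintype ι] [DecidableEq ι] [DecidableEq E]

/-- The support pattern of the parity-check matrix: `η i` rows supported on `F i` for each `i`,
and `s` rows with full support. -/
def rowSupp (F : ι → Finset E) (η : ι → ℕ) (s : ℕ) : (Σ i, Fin (η i)) ⊕ Fin s → E → Prop
  | Sum.inl q, e => e ∈ F q.1
  | Sum.inr _, _ => True

lemma sum_le_card_biUnion (F : ι → Finset E) (η : ι → ℕ)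
    (hpriv : ∀ j, η j ≤ (F j \ (Finset.univ.erase j).biUnion F).card) (I : Finset ι) :
    ∑ i ∈ I, η i ≤ (I.biUnion F).card := by
  calc ∑ i ∈ I, η i ≤ ∑ i ∈ I, (F i \ (Finset.univ.erase i).biUnion F).card :=
        Finset.sum_le_sum fun i _ => hpriv i
    _ = (I.biUnion fun i => F i \ (Finset.univ.erase i).biUnion F).card := by
        refine (Finset.card_biUnion fun i _ j _ hij => ?_).symm
        rw [Function.onFun, Finset.disjoint_left]
        intro e he he'
        simp only [Finset.mem_sdiff, Finset.mem_biUnion, Finset.mem_erase, Finset.mem_univ,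
          and_true, not_exists, not_and] at he he'
        exact he.2 j hij.symm he'.1
    _ ≤ (I.biUnion F).card :=
        Finset.card_le_card (Finset.biUnion_mono fun i _ => Finset.sdiff_subset)

variable [Fintype E]

/-- The rows of the parity-check matrix can be matched to distinct columns. -/
lemma exists_row_matching (F : ι → Finset E) (η : ι → ℕ) (s : ℕ)
    (hs : ∑ i, η i + s ≤ Fintype.card E)
    (hpriv : ∀ j, η j ≤ (F j \ (Finset.univ.erase j).biUnion F).card) :
    ∃ g : (Σ i, Fin (η i)) ⊕ Fin s → E, Function.Injective g ∧
      ∀ r, rowSupp F η s r (g r) := by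
  classical
  have h := (Finset.all_card_le_biUnion_card_iff_exists_injective
    (fun r : (Σ i, Fin (η i)) ⊕ Fin s => Finset.univ.filter (rowSupp F η s r))).1 ?_
  · simpa using h
  intro Q
  by_cases hQ : ∃ b, Sum.inr b ∈ Q
  · obtain ⟨b, hb⟩ := hQ
    have : Q.biUnion (fun r => Finset.univ.filter (rowSupp F η s r)) = Finset.univ := by
      refine Finset.eq_univ_of_forall fun e => Finset.mem_biUnion.2 ⟨_, hb, ?_⟩
      simp [rowSupp]
    rw [this, Finset.card_univ]
    refine (Finset.card_le_univ Q).trans ?_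
    simpa using hs
  · push Not at hQ
    let I : Finset ι := Finset.univ.filter fun i => ∃ a, Sum.inl ⟨i, a⟩ ∈ Q
    have h1 : Q ⊆ (I.sigma fun _ => Finset.univ).map Function.Embedding.inl := by
      rintro (⟨i, a⟩ | b) hr
      · simp only [Finset.mem_map, Function.Embedding.inl_apply, Sum.inl.injEq, exists_eq_right,
          Finset.mem_sigma, Finset.mem_univ, and_true, I, Finset.mem_filter, true_and]
        exact ⟨a, hr⟩
      · exact absurd hr (hQ b)
    have h2 : I.biUnion F ⊆ Q.biUnion (fun r => Finset.univ.filter (rowSupp F η s r)) := by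
      intro e he
      obtain ⟨i, hi, he⟩ := Finset.mem_biUnion.1 he
      obtain ⟨a, ha⟩ := (Finset.mem_filter.1 hi).2
      exact Finset.mem_biUnion.2 ⟨_, ha, by simpa [rowSupp] using he⟩
    calc Q.card ≤ ∑ i ∈ I, η i := by
          refine (Finset.card_le_card h1).trans ?_
          simp [Finset.card_sigma]
      _ ≤ _ := sum_le_card_biUnion F η hpriv I
      _ ≤ _ := Finset.card_le_card h2

/-- The code with the required properties, as the kernel of a generic parity-check matrix. The last
two clauses express that its minimum distance is the minimum of `|E| - k + 1 - ∑_I η` over the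
admissible index sets `I`. -/
lemma exists_code_s12 (F : ι → Finset E) (η : ι → ℕ) (k : ℕ)
    (hk : k + ∑ i, η i ≤ Fintype.card E)
    (hpriv : ∀ j, η j ≤ (F j \ (Finset.univ.erase j).biUnion F).card) :
    ∃ (p : ℕ) (_ : Fact p.Prime) (C : Submodule (ZMod p) (E → ZMod p)),
      Module.finrank (ZMod p) C = k ∧
      (∀ i, ∀ Z : Finset E, (F i).card ≤ (Z ∩ F i).card + η i → ∀ x ∈ C,
        (∀ z ∈ Z, x z = 0) → ∀ z ∈ F i, x z = 0) ∧
      (∀ x ∈ C, x ≠ 0 → ∃ I : Finset ι, (I.biUnion F).card < k + ∑ i ∈ I, η i ∧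
        Fintype.card E + 1 ≤ k + ∑ i ∈ I, η i + hammingNorm x) ∧
      (∀ I : Finset ι, (I.biUnion F).card < k + ∑ i ∈ I, η i →
        ∃ x ∈ C, x ≠ 0 ∧ hammingNorm x + (k + ∑ i ∈ I, η i) ≤ Fintype.card E + 1) := by
  classical
  obtain ⟨s, hs⟩ : ∃ s, Fintype.card E = k + ∑ i, η i + s := Nat.exists_eq_add_of_le hk
  obtain ⟨p, hp, H, hH0, hHdet⟩ := exists_generic_matrix (rowSupp F η s)
  have hmem : ∀ x, x ∈ LinearMap.ker H.mulVecLin ↔ ∀ r, ∑ e, H r e * x e = 0 := by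
    intro x
    rw [LinearMap.mem_ker, Matrix.mulVecLin_apply, funext_iff]
    rfl
  refine ⟨p, hp, LinearMap.ker H.mulVecLin, ?_, ?_, ?_, ?_⟩
  · obtain ⟨g, hg, hgs⟩ := exists_row_matching F η s (by omega) hpriv
    have hcard : (Finset.univ.image g).card = ∑ i, η i + s := by
      rw [Finset.card_image_of_injective _ hg]
      simp
    have hinv : ∀ t : (Finset.univ.image g : Finset E), ∃ r, g r = t := fun t => by
      obtain ⟨r, -, hr⟩ := Finset.mem_image.1 t.2
      exact ⟨r, hr⟩
    choose f hf using hinv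
    have hfinj : Function.Injective f := fun t t' h => by
      rw [Subtype.ext_iff, ← hf t, ← hf t', h]
    have hdet := hHdet _ f hfinj fun t => by simpa [hf t] using hgs (f t)
    apply le_antisymm
    · -- a codeword is determined by its values off the matched columns
      let L : LinearMap.ker H.mulVecLin →ₗ[ZMod p]
          (((Finset.univ.image g)ᶜ : Finset E) → ZMod p) :=
        (LinearMap.funLeft (ZMod p) (ZMod p) Subtype.val).comp (Submodule.subtype _)
      have hL : Function.Injective L := by
        rw [injective_iff_map_eq_zero]
        intro x hx
        refine Subtype.ext (eq_zero_of_matching H _ f hdet _ (fun e he => ?_)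
          fun t => (hmem _).1 x.2 _)
        exact congrFun hx ⟨e, Finset.mem_compl.2 he⟩
      have := LinearMap.finrank_le_finrank_of_injective hL
      rw [Module.finrank_fintype_fun_eq_card, Fintype.card_coe, Finset.card_compl, hcard] at this
      omega
    · have h1 := LinearMap.finrank_range_add_finrank_ker H.mulVecLin
      have h2 := Submodule.finrank_le (LinearMap.range H.mulVecLin)
      rw [Module.finrank_fintype_fun_eq_card] at h1 h2
      simp only [Fintype.card_sum, Fintype.card_sigma, Fintype.card_fin] at h2
      omega
  · intro i Z hZ x hx hx0
    have hc : (F i \ Z).card ≤ η i := by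
      have h1 := Finset.card_sdiff_add_card_inter (F i) Z
      rw [Finset.inter_comm] at h1
      omega
    obtain ⟨u⟩ : Nonempty (((F i \ Z : Finset E)) ↪ Fin (η i)) :=
      Function.Embedding.nonempty_of_card_le (by rwa [Fintype.card_coe, Fintype.card_fin])
    have hdet := hHdet (F i \ Z) (fun t => Sum.inl ⟨i, u t⟩)
      (fun t t' h => by simpa using h)
      (fun t => (Finset.mem_sdiff.1 t.2).1)
    -- the rows attached to `i` do not see the coordinates outside `F i`
    have h0 := eq_zero_of_matching H _ _ hdet (fun e => if e ∈ F i then x e else 0) ?_ ?_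
    · intro z hz
      simpa [hz] using congrFun h0 z
    · intro e he
      by_cases hi : e ∈ F i
      · simp only [hi, if_true]
        exact hx0 e (by_contra fun hz => he (Finset.mem_sdiff.2 ⟨hi, hz⟩))
      · simp [hi]
    · intro t
      rw [← (hmem x).1 hx (Sum.inl ⟨i, u t⟩)]
      refine Finset.sum_congr rfl fun e _ => ?_
      by_cases hi : e ∈ F i
      · simp [hi]
      · rw [hH0 (Sum.inl ⟨i, u t⟩) e hi, zero_mul, zero_mul]
  · intro x hx hx0
    let X : Finset E := Finset.univ.filter fun e => x e ≠ 0
    have hX : hammingNorm x = X.card := rfl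
    have hall : ¬ ∀ Y : Finset X, Y.card ≤
        (Y.biUnion fun e => Finset.univ.filter fun r => rowSupp F η s r e).card := by
      intro h
      obtain ⟨f, hf, hfs⟩ := (Finset.all_card_le_biUnion_card_iff_exists_injective _).1 h
      refine hx0 (eq_zero_of_matching H X f (hHdet X f hf fun t => by simpa using hfs t) x ?_
        fun t => (hmem x).1 hx _)
      intro e he
      simpa [X] using he
    push Not at hall
    obtain ⟨Y, hY⟩ := hall
    obtain ⟨y, hy⟩ : Y.Nonempty := by
      rw [← Finset.card_pos]
      omega
    let I : Finset ι := Finset.univ.filter fun i => ∀ e ∈ Y, (e : E) ∉ F i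
    have hrows : rowsOf η s Iᶜ ⊆
        Y.biUnion fun e => Finset.univ.filter fun r => rowSupp F η s r e := by
      rintro (⟨i, a⟩ | b) hr
      · have : ∃ e ∈ Y, (e : E) ∈ F i := by
          simpa [rowsOf, I] using hr
        obtain ⟨e, he, hei⟩ := this
        exact Finset.mem_biUnion.2 ⟨e, he, Finset.mem_filter.2 ⟨Finset.mem_univ _, hei⟩⟩
      · exact Finset.mem_biUnion.2 ⟨y, hy, Finset.mem_filter.2 ⟨Finset.mem_univ _, trivial⟩⟩
    have h1 := Finset.card_le_card hrows
    rw [card_rowsOf] at h1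
    have h2 : Y.card ≤ X.card := by simpa using Finset.card_le_univ Y
    have h3 : (I.biUnion F).card + Y.card ≤ Fintype.card E := by
      rw [← Finset.card_map (Function.Embedding.subtype (· ∈ X)) (s := Y),
        ← Finset.card_union_of_disjoint]
      · exact Finset.card_le_univ _
      · rw [Finset.disjoint_left]
        intro e he he'
        obtain ⟨i, hi, he⟩ := Finset.mem_biUnion.1 he
        obtain ⟨e', heY, rfl⟩ := Finset.mem_map.1 he'
        exact (Finset.mem_filter.1 hi).2 e' heY he
    have h4 := Finset.sum_add_sum_compl I η
    exact ⟨I, by omega, by omega⟩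
  · intro I hI
    have h4 := Finset.sum_add_sum_compl I η
    obtain ⟨Y, hYI, hYc⟩ := Finset.exists_subset_card_eq
      (s := (I.biUnion F)ᶜ) (n := ∑ i ∈ Iᶜ, η i + s + 1) (by
        rw [Finset.card_compl]
        omega)
    -- only the rows in `rowsOf η s Iᶜ` meet the columns in `Y`
    let H' : Matrix (rowsOf η s Iᶜ) Y (ZMod p) := H.submatrix Subtype.val Subtype.val
    have hker : LinearMap.ker H'.mulVecLin ≠ ⊥ := by
      apply LinearMap.ker_ne_bot_of_finrank_lt
      simp only [Module.finrank_fintype_fun_eq_card, Fintype.card_coe, card_rowsOf]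
      omega
    obtain ⟨v, hv, hv0⟩ := (Submodule.ne_bot_iff _).1 hker
    let x : E → ZMod p := fun e => if h : e ∈ Y then v ⟨e, h⟩ else 0
    have hxY : ∀ e ∉ Y, x e = 0 := fun e he => dif_neg he
    have hxv : ∀ e : Y, x e = v e := fun e => dif_pos e.2
    refine ⟨x, (hmem x).2 fun r => ?_, fun h => hv0 ?_, ?_⟩
    · by_cases hr : r ∈ rowsOf η s Iᶜ
      · have := congrFun (LinearMap.mem_ker.1 hv) ⟨r, hr⟩
        simp only [Matrix.mulVecLin_apply, Matrix.mulVec, dotProduct, H', Matrix.submatrix_apply,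
          Pi.zero_apply, ← hxv] at this
        rw [← this, Finset.sum_coe_sort Y (fun e => H r e * x e)]
        exact (Finset.sum_subset (Finset.subset_univ _) fun e _ he => by
          rw [hxY e he, mul_zero]).symm
      · refine Finset.sum_eq_zero fun e _ => ?_
        by_cases he : e ∈ Y
        · rcases r with ⟨i, a⟩ | b
          · have hi : i ∈ I := by simpa [rowsOf] using hr
            rw [hH0 (Sum.inl ⟨i, a⟩) e fun h => Finset.mem_compl.1 (hYI he)
              (Finset.mem_biUnion.2 ⟨i, hi, h⟩), zero_mul]
          · simp [rowsOf] at hr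
        · rw [hxY e he, mul_zero]
    · ext e
      rw [← hxv e, h]
      rfl
    · have : hammingNorm x ≤ Y.card := by
        refine Finset.card_le_card fun e he => ?_
        by_contra hY
        exact (Finset.mem_filter.1 he).2 (hxY e hY)
      omega

end Construction

namespace Constr1Config

variable (c : Constr1Config)

/-- The set `F i`, regarded as a set of coordinates of the code. -/
def coords (i : Fin c.m) : Finset c.E := (c.F i).subtype (· ∈ c.E)

lemma map_coords (i : Fin c.m) :
    (c.coords i).map (Function.Embedding.subtype (· ∈ c.E)) = c.F i := by
  rw [coords, Finset.subtype_map, Finset.filter_eq_self]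
  exact fun e he => Finset.mem_biUnion.2 ⟨i, Finset.mem_univ _, he⟩

lemma card_coords (i : Fin c.m) : (c.coords i).card = (c.F i).card := by
  rw [← c.map_coords i, Finset.card_map]

lemma mem_coords {i : Fin c.m} {e : c.E} : e ∈ c.coords i ↔ (e : ℕ) ∈ c.F i := by
  simp [coords]

lemma map_biUnion_coords (I : Finset (Fin c.m)) :
    (I.biUnion c.coords).map (Function.Embedding.subtype (· ∈ c.E)) = I.biUnion c.F := by
  rw [Finset.map_eq_image, Finset.biUnion_image]
  refine Finset.biUnion_congr rfl fun i _ => ?_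
  rw [← Finset.map_eq_image, map_coords]

lemma card_biUnion_coords (I : Finset (Fin c.m)) :
    (I.biUnion c.coords).card = (I.biUnion c.F).card := by
  rw [← map_biUnion_coords, Finset.card_map]

lemma rho_add_eta (i : Fin c.m) : c.ρ i + c.η i = (c.F i).card :=
  Nat.add_sub_of_le (c.hρlt i).le

lemma k_add_sum_eta_le : c.k + ∑ i, c.η i ≤ Fintype.card c.E := by
  have h := c.hdim
  have h1 : ∑ i, (((c.F i).card : ℤ) - (c.ρ i : ℤ)) = ((∑ i, c.η i : ℕ) : ℤ) := by
    push_cast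
    refine Finset.sum_congr rfl fun i _ => ?_
    have := c.rho_add_eta i
    omega
  rw [h1] at h
  rw [Fintype.card_coe]
  change (c.k : ℤ) ≤ (c.E.card : ℤ) - _ at h
  omega

/-- The field `hint` provides `η j` elements of `F j` that lie in no other `F i`. -/
lemma eta_le_card_private (j : Fin c.m) :
    c.η j ≤ (c.coords j \ (Finset.univ.erase j).biUnion c.coords).card := by
  have h1 := c.hint j
  have h2 := Finset.card_sdiff_add_card_inter (c.coords j)
    ((Finset.univ.erase j).biUnion c.coords)
  have h3 : (c.coords j ∩ (Finset.univ.erase j).biUnion c.coords).card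
      = ((Finset.univ.erase j).biUnion c.F ∩ c.F j).card := by
    rw [Finset.inter_comm, ← Finset.card_map (Function.Embedding.subtype (· ∈ c.E)),
      Finset.map_inter, map_biUnion_coords, map_coords]
  have h4 := c.card_coords j
  have h5 := c.rho_add_eta j
  omega

lemma delta_le (i : Fin c.m) : c.δ ≤ 1 + c.η i :=
  Nat.add_le_add_left (Finset.inf'_le _ (Finset.mem_univ i)) 1

lemma one_le_delta : 1 ≤ c.δ := Nat.le_add_right _ _

end Constr1Config

/-- Every Construction-1 configuration is realized by a linear locally repairable code
over some (sufficiently large) finite field: a code of length `n = |E|` (coordinates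
indexed by `E`), dimension `k`, all-symbol locality `(r,δ)` and minimum distance `d`;
moreover every subset `S ⊆ F i` with `|S| = ρ i + δ - 1` is an `(r,δ)`-locality set. -/
theorem constr1_realized_by_linear_LRC (c : Constr1Config) :
    ∃ (F : Type) (_ : Field F) (_ : Fintype F) (_ : DecidableEq F)
      (C : Submodule F ((↥c.E) → F)) (d : ℕ),
      Module.finrank F C = c.k ∧
      HasAllSymbolLocality C c.r c.δ ∧
      IsMinDist C d ∧ (d : ℤ) = c.d ∧
      (∀ i : Fin c.m, ∀ S : Finset (↥c.E),
        (∀ x ∈ S, (x : ℕ) ∈ c.F i) → S.card = c.ρ i + c.δ - 1 →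
        IsLocalitySet C c.r c.δ S) := by
  classical
  obtain ⟨p, hp, C, hdim, hloc, hlow, hup⟩ :=
    exists_code_s12 c.coords c.η c.k c.k_add_sum_eta_le c.eta_le_card_private
  -- two codewords agreeing in `ρ i` positions of `F i` agree on `F i`
  have hS : ∀ i : Fin c.m, ∀ S : Finset (↥c.E), (∀ x ∈ S, (x : ℕ) ∈ c.F i) →
      S.card = c.ρ i + c.δ - 1 → IsLocalitySet C c.r c.δ S := by
    intro i S hSF hSc
    have h1 := c.one_le_delta
    refine ⟨?_, fun x hx y hy hxy => ?_⟩
    · have : c.ρ i ≤ c.r := Finset.le_sup (f := c.ρ) (Finset.mem_univ i)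
      omega
    · by_contra! hlt
      obtain ⟨e, heS, he⟩ := hxy
      refine he (sub_eq_zero.1 ?_)
      refine hloc i (S.filter fun e => x e = y e) ?_ (x - y) (C.sub_mem hx hy)
        (fun z hz => sub_eq_zero.2 (Finset.mem_filter.1 hz).2) e (c.mem_coords.2 (hSF e heS))
      have hsub : (S.filter fun e => x e = y e) ∩ c.coords i = S.filter fun e => x e = y e :=
        Finset.inter_eq_left.2 fun z hz =>
          c.mem_coords.2 (hSF z (Finset.mem_filter.1 hz).1)
      have h2 := Finset.card_filter_add_card_filter_not (s := S) (fun e => x e = y e)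
      have h3 := c.rho_add_eta i
      have h4 := c.card_coords i
      have h5 : (S.filter fun e => ¬ x e = y e).card < c.δ := hlt
      rw [hsub]
      omega
  -- an admissible index set with the largest value of `∑ η`; `∅` is admissible because `0 < k`
  let A : Finset (Finset (Fin c.m)) := Finset.univ.powerset.filter
    (fun I : Finset (Fin c.m) =>
      ((I.biUnion c.F).card : ℤ) - ∑ i ∈ I, (c.η i : ℤ) < (c.k : ℤ))
  have hA : ∀ I, I ∈ A ↔ (I.biUnion c.coords).card < c.k + ∑ i ∈ I, c.η i := by
    intro I
    rw [c.card_biUnion_coords]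
    simp only [A, Finset.mem_filter, Finset.powerset_univ, Finset.mem_univ, true_and]
    zify
    constructor <;> intro h <;> linarith
  have hAne : A.Nonempty := ⟨∅, (hA ∅).2 (by simpa using c.hk)⟩
  obtain ⟨I, hIA, hI⟩ := Finset.exists_mem_eq_sup A hAne fun I => ∑ i ∈ I, c.η i
  have hd : c.d = (Fintype.card c.E : ℤ) - c.k + 1 - ((∑ i ∈ I, c.η i : ℕ) : ℤ) := by
    rw [← hI, Fintype.card_coe]
    rfl
  have hlow' : ∀ x ∈ C, x ≠ 0 → c.d ≤ hammingNorm x := by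
    intro x hx hx0
    obtain ⟨J, hJ, hJx⟩ := hlow x hx hx0
    have h1 : ∑ i ∈ J, c.η i ≤ ∑ i ∈ I, c.η i := by
      rw [← hI]
      exact Finset.le_sup (f := fun I => ∑ i ∈ I, c.η i) ((hA J).2 hJ)
    omega
  obtain ⟨x, hxC, hx0, hx⟩ := hup I ((hA I).1 hIA)
  have hxd : (hammingNorm x : ℤ) = c.d := le_antisymm (by omega) (hlow' x hxC hx0)
  refine ⟨ZMod p, inferInstance, inferInstance, inferInstance, C, hammingNorm x, hdim, ?_,
    ⟨⟨x, hxC, 0, C.zero_mem, hx0, hammingDist_zero_right x⟩, ?_⟩, hxd, hS⟩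
  · intro e
    obtain ⟨i, -, hi⟩ := Finset.mem_biUnion.1 e.2
    have h1 := c.one_le_delta
    have h2 := c.delta_le i
    have h3 := c.rho_add_eta i
    have h4 := c.card_coords i
    have h5 := c.hρpos i
    obtain ⟨S, heS, hSF, hSc⟩ := Finset.exists_subsuperset_card_eq
      (s := {e}) (t := c.coords i) (n := c.ρ i + c.δ - 1)
      (Finset.singleton_subset_iff.2 (c.mem_coords.2 hi))
      (by rw [Finset.card_singleton]; omega) (by omega)
    exact ⟨S, heS (Finset.mem_singleton_self e),
      hS i S (fun z hz => c.mem_coords.1 (hSF hz)) hSc⟩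
  · intro y hy z hz hyz
    rw [hammingDist_eq_hammingNorm]
    have := hlow' (-y + z) (C.add_mem (C.neg_mem hy) hz) (by rwa [Ne, neg_add_eq_zero])
    omega
end
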